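/- arXiv:2306.15744 — 3 statements merged into one kernel-verified Lean document; each statement's English description precedes it below -/
import Mathlib

section
/- For any concept class H over a finite domain X that is mergeable with K-compressions, and every dataset size n, there exists a ticketed learning–unlearning scheme for H (valid for H-realizable datasets of size n) with space complexity (C_s = ⌈log₂|H|⌉, C_t = 2K·⌈log₂|Z|⌉ + ⌈log₂ n⌉), where Z = X × {0,1}. -/
/-- Empirical loss of hypothesis `h` on dataset `S` (sum of 0-1 losses). -/
def empLoss {X : Type} (h : X → Bool) (S : List (X × Bool)) : ℕ :=
  (S.map fun z => if h z.1 = z.2 then 0 else 1).sum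

/-- A dataset is `H`-realizable if some hypothesis in `H` has zero empirical loss on it. -/
def IsRealizable {X : Type} (H : Set (X → Bool)) (S : List (X × Bool)) : Prop :=
  ∃ h ∈ H, empLoss h S = 0

/-- The set of empirical risk minimizers in `H` on the dataset `S`. -/
def ERM {X : Type} (H : Set (X → Bool)) (S : List (X × Bool)) : Set (X → Bool) :=
  {h | h ∈ H ∧ ∀ g ∈ H, empLoss h S ≤ empLoss g S}

/-- The surviving dataset `S ∖ S_I`: the examples of `S` at indices outside `I`,
kept in their original order. -/
def surviving {Z : Type} (S : List Z) (I : Finset (Fin S.length)) : List Z :=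
  ((List.finRange S.length).filter fun i => decide (i ∉ I)).map S.get

/-- The unlearning request together with its tickets: the multiset of (example, ticket)
pairs over the indices in `I`. -/
def removedPairs {Z T : Type} (S : List Z) (tk : Fin S.length → T)
    (I : Finset (Fin S.length)) : Multiset (Z × T) :=
  I.val.map fun i => (S.get i, tk i)

theorem tl_mem_diff {α : Type} [BEq α] [LawfulBEq α] (z : α) (T : List α) :
    ∀ S : List α, T.count z < S.count z → z ∈ S.diff T := by
  induction T with
  | nil => intro S h; simpa using h
  | cons a T ih =>
    intro S h
    rw [List.diff_cons]
    apply ih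
    rw [List.count_erase]
    rw [List.count_cons] at h
    omega

theorem tl_loss_iff {X : Type} (h : X → Bool) (S : List (X × Bool)) :
    empLoss h S = 0 ↔ ∀ z ∈ S, h z.1 = z.2 := by
  unfold empLoss
  induction S with
  | nil => simp
  | cons a S ih =>
    rw [List.map_cons, List.sum_cons, Nat.add_eq_zero_iff, ih, List.forall_mem_cons]
    by_cases h1 : h a.1 = a.2 <;> simp [h1]

theorem tl_real_iff {X : Type} (H : Set (X → Bool)) (S : List (X × Bool)) :
    IsRealizable H S ↔ ∃ h ∈ H, ∀ z ∈ S, h z.1 = z.2 := by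
  unfold IsRealizable
  exact exists_congr fun h => and_congr_right fun _ => tl_loss_iff h S

theorem tl_real_mono {X : Type} {H : Set (X → Bool)} {S S' : List (X × Bool)}
    (h : IsRealizable H S) (hs : S' ⊆ S) : IsRealizable H S' := by
  rw [tl_real_iff] at *
  obtain ⟨g, hg, hz⟩ := h
  exact ⟨g, hg, fun z hz' => hz z (hs hz')⟩

/-- A compression of `S` encodes every intermediate dataset. -/
theorem tl_between {X : Type} [BEq (X × Bool)] [LawfulBEq (X × Bool)]
    {H : Set (X → Bool)} {β : Type} {K : ℕ}
    {Encode : List (X × Bool) → β}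
    {Compress : List (X × Bool) → List (X × Bool) → Prop}
    (hperm : ∀ S₁ S₂ : List (X × Bool), S₁.Perm S₂ → Encode S₁ = Encode S₂)
    (hcmp : ∀ S T, IsRealizable H S → Compress S T →
      T.length ≤ K ∧ T.Subperm S ∧ Encode T = Encode S ∧
        ∀ z ∈ S.diff T, Compress (S.erase z) T)
    (T S' : List (X × Bool)) (hTS' : T.Subperm S') :
    ∀ (m : ℕ) (S : List (X × Bool)), S.length = m → IsRealizable H S → Compress S T →
      S'.Subperm S → Encode S' = Encode T := by
  intro m
  induction m with
  | zero =>
    intro S hm hr hc hs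
    rw [(hcmp S T hr hc).2.2.1]
    exact hperm _ _ (hs.perm_of_length_le (by omega))
  | succ m ih =>
    intro S hm hr hc hs
    by_cases hl : S.length ≤ S'.length
    · rw [(hcmp S T hr hc).2.2.1]
      exact hperm _ _ (hs.perm_of_length_le hl)
    · have : ∃ z, S'.count z < S.count z := by
        by_contra hcon
        push Not at hcon
        have h2 : S.Subperm S' := List.subperm_ext_iff.2 fun x _ => hcon x
        exact hl h2.length_le
      obtain ⟨z, hz⟩ := this
      have hzS : z ∈ S := List.count_pos_iff.1 (by omega)
      have hzd : z ∈ S.diff T := tl_mem_diff z T S (lt_of_le_of_lt (hTS'.count_le z) hz)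
      refine ih (S.erase z) ?_ ?_ ((hcmp S T hr hc).2.2.2 z hzd) ?_
      · rw [List.length_erase_of_mem hzS]; omega
      · exact tl_real_mono hr (List.erase_subset)
      · rw [List.subperm_ext_iff]
        intro x _
        rw [List.count_erase]
        have := hs.count_le x
        split_ifs with hzx
        · have : z = x := by simpa using hzx
          subst this; omega
        · omega

/-- `K` copies of each element. -/
noncomputable def tlRep {Z : Type} (K : ℕ) (A : Finset Z) : List Z :=
  (List.replicate K A.toList).flatten

theorem tlRep_mem {Z : Type} (K : ℕ) (A : Finset Z) {z : Z} (hz : z ∈ tlRep K A) : z ∈ A := by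
  unfold tlRep at hz
  simp at hz
  exact hz.2

theorem tlRep_count {Z : Type} [BEq Z] [LawfulBEq Z] (K : ℕ) (A : Finset Z) {z : Z} (hz : z ∈ A) :
    (tlRep K A).count z = K := by
  unfold tlRep
  rw [List.count_flatten]
  have : A.toList.count z = 1 := List.count_eq_one_of_mem A.nodup_toList (by simpa using hz)
  simp [this]

def tlReal {X : Type} (H : Finset (X → Bool)) (A : Finset (X × Bool)) : Prop :=
  ∃ h ∈ H, ∀ z ∈ A, h z.1 = z.2

/-- Set-level consequences of being mergeable with compressions. -/
theorem tl_core {X : Type} [DecidableEq X]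
    (H : Finset (X → Bool)) (C K : ℕ) (hK : 0 < K)
    (Encode : List (X × Bool) → Fin C → Bool)
    (Decode : (Fin C → Bool) → X → Bool)
    (Merge : (Fin C → Bool) → (Fin C → Bool) → Fin C → Bool)
    (Compress : List (X × Bool) → List (X × Bool) → Prop)
    (hperm : ∀ S₁ S₂ : List (X × Bool), S₁.Perm S₂ → Encode S₁ = Encode S₂)
    (hdecH : ∀ b, Decode b ∈ H)
    (hdecERM : ∀ S, IsRealizable ↑H S → Decode (Encode S) ∈ ERM ↑H S)
    (hmerge : ∀ S₁ S₂, IsRealizable ↑H (S₁ ++ S₂) →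
      Encode (S₁ ++ S₂) = Merge (Encode S₁) (Encode S₂))
    (hex : ∀ S, IsRealizable ↑H S → ∃ T, Compress S T)
    (hcmp : ∀ S T, IsRealizable ↑H S → Compress S T →
      T.length ≤ K ∧ T.Subperm S ∧ Encode T = Encode S ∧
        ∀ z ∈ S.diff T, Compress (S.erase z) T) :
    ∃ D : Finset (X × Bool) → (X → Bool),
      (∀ A, D A ∈ H) ∧ (∀ A, tlReal H A → ∀ z ∈ A, D A z.1 = z.2) ∧
      (∀ S : Finset (X × Bool), tlReal H S → S.Nonempty →
        ∃ T ⊆ S, T.Nonempty ∧ T.card ≤ K ∧ ∀ S', T ⊆ S' → S' ⊆ S →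
          ∀ P, tlReal H (P ∪ S) → D (P ∪ S') = D (P ∪ T)) := by
  have hrr : ∀ (A : Finset (X × Bool)) (l : List (X × Bool)), tlReal H A → (∀ z ∈ l, z ∈ A) →
      IsRealizable (↑H) l := by
    rintro A l ⟨h, hh, hz⟩ hl
    rw [tl_real_iff]
    exact ⟨h, hh, fun z h' => hz z (hl z h')⟩
  have hrmono : ∀ (A B : Finset (X × Bool)), tlReal H A → B ⊆ A → tlReal H B := by
    rintro A B ⟨h, hh, hz⟩ hl
    exact ⟨h, hh, fun z h' => hz z (hl h')⟩
  have hstab : ∀ l l' : List (X × Bool), IsRealizable (↑H) (l ++ l') →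
      (∀ z ∈ l ++ l', K ≤ l.count z ∧ K ≤ l'.count z) → Encode l = Encode l' := by
    intro l l' hr hc
    obtain ⟨T, hT⟩ := hex _ hr
    obtain ⟨h1, h2, h3, h4⟩ := hcmp _ _ hr hT
    have e1 : Encode l = Encode T := by
      refine tl_between hperm hcmp T l ?_ _ _ rfl hr hT ?_
      · rw [List.subperm_ext_iff]
        intro x hx
        exact (List.count_le_length.trans h1).trans (hc x (h2.subset hx)).1
      · exact (List.sublist_append_left l l').subperm
    have e2 : Encode l' = Encode T := by
      refine tl_between hperm hcmp T l' ?_ _ _ rfl hr hT ?_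
      · rw [List.subperm_ext_iff]
        intro x hx
        exact (List.count_le_length.trans h1).trans (hc x (h2.subset hx)).2
      · exact (List.sublist_append_right l l').subperm
    rw [e1, e2]
  have hun : ∀ A B : Finset (X × Bool), tlReal H (A ∪ B) →
      Encode (tlRep K (A ∪ B)) = Merge (Encode (tlRep K A)) (Encode (tlRep K B)) := by
    intro A B hr
    have hmem : ∀ z ∈ tlRep K A ++ tlRep K B, z ∈ A ∪ B := by
      intro z hz
      rcases List.mem_append.1 hz with h | h
      · exact Finset.mem_union_left _ (tlRep_mem _ _ h)
      · exact Finset.mem_union_right _ (tlRep_mem _ _ h)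
    rw [← hmerge _ _ (hrr _ _ hr hmem)]
    have hmem2 : ∀ z ∈ tlRep K (A ∪ B) ++ (tlRep K A ++ tlRep K B), z ∈ A ∪ B := by
      intro z hz
      rcases List.mem_append.1 hz with h | h
      · exact tlRep_mem _ _ h
      · exact hmem z h
    refine hstab _ _ (hrr _ _ hr hmem2) ?_
    intro z hz
    have hz' := hmem2 z hz
    refine ⟨(tlRep_count K _ hz').ge, ?_⟩
    rw [List.count_append]
    rcases Finset.mem_union.1 hz' with h | h
    · rw [tlRep_count K _ h]; omega
    · rw [tlRep_count K _ h]; omega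
  refine ⟨fun A => Decode (Encode (tlRep K A)), fun A => hdecH _, ?_, ?_⟩
  · intro A hA z hz
    have h1 := hdecERM (tlRep K A) (hrr A _ hA fun z hz => tlRep_mem _ _ hz)
    obtain ⟨g, hg, hg0⟩ := hrr A (tlRep K A) hA fun z hz => tlRep_mem _ _ hz
    have h2 := h1.2 g hg
    rw [hg0] at h2
    have h3 : empLoss (Decode (Encode (tlRep K A))) (tlRep K A) = 0 := by omega
    rw [tl_loss_iff] at h3
    have hzm : z ∈ tlRep K A := List.count_pos_iff.1 (by rw [tlRep_count K A hz]; exact hK)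
    exact h3 z hzm
  · intro S hS hne
    have hr := hrr S (tlRep K S) hS fun z hz => tlRep_mem _ _ hz
    obtain ⟨T, hT⟩ := hex _ hr
    obtain ⟨h1, h2, h3, h4⟩ := hcmp _ _ hr hT
    have hTS : T.toFinset ⊆ S := fun z hz => tlRep_mem K S (h2.subset (by simpa using hz))
    have key : ∀ S', T.toFinset ⊆ S' → S' ⊆ S → Encode (tlRep K S') = Encode T := by
      intro S' h5 h6
      refine tl_between hperm hcmp T _ ?_ _ _ rfl hr hT ?_
      · rw [List.subperm_ext_iff]
        intro x hx
        rw [tlRep_count K S' (h5 (by simpa using hx))]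
        exact List.count_le_length.trans h1
      · rw [List.subperm_ext_iff]
        intro x hx
        have := tlRep_mem _ _ hx
        rw [tlRep_count K _ this, tlRep_count K _ (h6 this)]
    have : ∃ T' ⊆ S, T'.Nonempty ∧ T'.card ≤ K ∧ T.toFinset ⊆ T' := by
      by_cases hTe : T.toFinset.Nonempty
      · exact ⟨T.toFinset, hTS, hTe, (List.toFinset_card_le T).trans h1, subset_rfl⟩
      · obtain ⟨z, hz⟩ := hne
        rw [Finset.not_nonempty_iff_eq_empty] at hTe
        exact ⟨{z}, by simpa using hz, by simp, by rw [Finset.card_singleton]; exact hK, by simp [hTe]⟩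
    obtain ⟨T', hT'S, hT'ne, hT'c, hTT'⟩ := this
    refine ⟨T', hT'S, hT'ne, hT'c, ?_⟩
    intro S' h5 h6 P hP
    have hP1 := hrmono _ (P ∪ S') hP (Finset.union_subset_union_right h6)
    have hP2 := hrmono _ (P ∪ T') hP (Finset.union_subset_union_right hT'S)
    simp only [hun _ _ hP1, hun _ _ hP2, key S' (hTT'.trans h5) h6, key T' hTT' hT'S]

/-- Layering of a finite index set. -/
theorem tl_layers {ι : Type} [DecidableEq ι] (Good : Finset ι → Finset ι → Prop)
    (h0 : Good ∅ ∅) (hG : ∀ J : Finset ι, J.Nonempty → ∃ L ⊆ J, L.Nonempty ∧ Good J L) :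
    ∀ J : Finset ι, ∃ lay : ι → ℕ, ∀ i,
      ((J.filter fun p => i ≤ lay p).Nonempty → (J.filter fun p => lay p = i).Nonempty) ∧
      Good (J.filter fun p => i ≤ lay p) (J.filter fun p => lay p = i) := by
  intro J
  induction J using Finset.strongInduction with
  | H J ih =>
    by_cases hJ : J.Nonempty
    · obtain ⟨L, hLJ, hL, hg⟩ := hG J hJ
      obtain ⟨lay, hlay⟩ := ih (J \ L) (Finset.sdiff_ssubset hLJ hL)
      refine ⟨fun p => if p ∈ L then 0 else lay p + 1, ?_⟩
      rintro (_ | i)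
      · have e1 : (J.filter fun p => 0 ≤ if p ∈ L then 0 else lay p + 1) = J := by
          ext p; simp
        have e2 : (J.filter fun p => (if p ∈ L then 0 else lay p + 1) = 0) = L := by
          ext p; have := @hLJ p; simp; tauto
        rw [e1, e2]
        exact ⟨fun _ => hL, hg⟩
      · have e1 : (J.filter fun p => i + 1 ≤ if p ∈ L then 0 else lay p + 1) =
            ((J \ L).filter fun p => i ≤ lay p) := by
          ext p; by_cases hp : p ∈ L <;> simp [hp]
        have e2 : (J.filter fun p => (if p ∈ L then 0 else lay p + 1) = i + 1) =
            ((J \ L).filter fun p => lay p = i) := by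
          ext p; by_cases hp : p ∈ L <;> simp [hp]
        rw [e1, e2]
        exact hlay i
    · rw [Finset.not_nonempty_iff_eq_empty] at hJ
      subst hJ
      exact ⟨fun _ => 0, fun i => by simpa using h0⟩

/-- Bit-level encoding of a finite type. -/
theorem tl_bits (α : Type) [Fintype α] (b : ℕ) (h : Fintype.card α ≤ 2 ^ b) :
    ∃ e : α → (Fin b → Bool), Function.Injective e := by
  obtain ⟨e⟩ := Function.Embedding.nonempty_of_card_le (α := α) (β := Fin b → Bool) (by simpa using h)
  exact ⟨e, e.injective⟩

theorem tl_finset_list {Z : Type} [DecidableEq Z] (B : Finset Z) (hB : B.Nonempty) (K : ℕ)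
    (hK : B.card ≤ K) : ∃ f : Fin K → Z, ∀ z, z ∈ B ↔ ∃ i, f i = z := by
  obtain ⟨z0, hz0⟩ := hB
  refine ⟨fun i => if h : i.1 < B.card then (B.equivFin.symm ⟨i.1, h⟩).1 else z0, fun z => ⟨?_, ?_⟩⟩
  · intro hz
    refine ⟨⟨(B.equivFin ⟨z, hz⟩).1, lt_of_lt_of_le (B.equivFin ⟨z, hz⟩).2 hK⟩, ?_⟩
    simp
  · rintro ⟨i, rfl⟩
    dsimp only
    split_ifs with h
    · exact (B.equivFin.symm ⟨i.1, h⟩).2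
    · exact hz0

/-- The ticket code: given `z`, a layer number and two sets. -/
theorem tl_ticket {X : Type} [Fintype X] [DecidableEq X] (K n : ℕ) (hK : 0 < K) :
    ∃ (enc : X × Bool → ℕ × Finset (X × Bool) × Finset (X × Bool) →
        Fin (2 * K * Nat.clog 2 (Fintype.card (X × Bool)) + Nat.clog 2 n) → Bool)
      (dec : X × Bool →
        (Fin (2 * K * Nat.clog 2 (Fintype.card (X × Bool)) + Nat.clog 2 n) → Bool) →
        ℕ × Finset (X × Bool) × Finset (X × Bool)),
      ∀ z j A B, j < n → z ∈ A → A.card ≤ K → B.card ≤ K → dec z (enc z (j, A, B)) = (j, A, B) := by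
  obtain ⟨K, rfl⟩ : ∃ k, K = k + 1 := ⟨K - 1, by omega⟩
  obtain ⟨e, he⟩ := tl_bits (Fin n × (Fin (K + 1) → X × Bool) × (Fin (K + 1) → X × Bool))
    (2 * (K + 1) * Nat.clog 2 (Fintype.card (X × Bool)) + Nat.clog 2 n) (by
      rw [Fintype.card_prod, Fintype.card_prod, Fintype.card_fun, Fintype.card_fin, Fintype.card_fin,
        ← pow_add, ← two_mul, pow_add, mul_comm, mul_comm (2 * (K + 1)) (Nat.clog 2 _), pow_mul 2]
      exact Nat.mul_le_mul (Nat.pow_le_pow_left (Nat.le_pow_clog (by norm_num) _) _)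
        (Nat.le_pow_clog (by norm_num) _))
  let g : X × Bool → (Fin n × (Fin (K + 1) → X × Bool) × (Fin (K + 1) → X × Bool)) →
      ℕ × Finset (X × Bool) × Finset (X × Bool) := fun z t =>
    (t.1, insert z (Finset.univ.image fun i : Fin K => t.2.1 i.succ),
      if t.2.1 0 = z then Finset.univ.image t.2.2 else ∅)
  have hg : ∀ z j A B, j < n → z ∈ A → A.card ≤ K + 1 → B.card ≤ K + 1 →
      ∃ t, g z t = (j, A, B) := by
    intro z j A B hj hz hA hB
    have hAe : ∃ a : Fin K → X × Bool,
        insert z (Finset.univ.image fun i : Fin K => a i) = A := by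
      by_cases hne : (A.erase z).Nonempty
      · obtain ⟨f, hf⟩ := tl_finset_list (A.erase z) hne K (by
          rw [Finset.card_erase_of_mem hz]; omega)
        refine ⟨f, ?_⟩
        have : (Finset.univ.image fun i : Fin K => f i) = A.erase z := by
          ext w; rw [hf]; simp
        rw [this, Finset.insert_erase hz]
      · rw [Finset.not_nonempty_iff_eq_empty] at hne
        refine ⟨fun _ => z, ?_⟩
        have hA' : A = {z} := by rw [← Finset.insert_erase hz, hne]; rfl
        rw [hA']
        ext w; simp
        rintro _ rfl; rfl
    obtain ⟨a, ha⟩ := hAe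
    by_cases hBe : B.Nonempty
    · obtain ⟨f, hf⟩ := tl_finset_list B hBe (K + 1) hB
      refine ⟨(⟨j, hj⟩, Fin.cons z a, f), ?_⟩
      simp only [g, Fin.cons_succ, Fin.cons_zero, if_true, ha]
      congr 2
      ext w; rw [hf]; simp
    · rw [Finset.not_nonempty_iff_eq_empty] at hBe
      refine ⟨(⟨j, hj⟩, Fin.cons (z.1, !z.2) a, fun _ => z), ?_⟩
      have : ((z.1, !z.2) : X × Bool) ≠ z := by
        intro h; have := congrArg Prod.snd h; simp at this
      simp only [g, Fin.cons_succ, Fin.cons_zero, if_neg this, ha, hBe]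
  classical
  let junk : ℕ × Finset (X × Bool) × Finset (X × Bool) := (0, ∅, ∅)
  refine ⟨fun z t => if h : ∃ s, g z s = t then e h.choose else fun _ => false,
    fun z b => if h : ∃ s, e s = b then g z h.choose else junk, ?_⟩
  intro z j A B hj hz hA hB
  have h := hg z j A B hj hz hA hB
  have h2 : ∃ s, e s = e h.choose := ⟨_, rfl⟩
  simp only [dif_pos h, dif_pos h2]
  rw [he h2.choose_spec]
  exact h.choose_spec

theorem tl_surv {Z : Type} [DecidableEq Z] (S : List Z) (I : Finset (Fin S.length)) :
    (surviving S I).toFinset = (Finset.univ \ I).image S.get := by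
  ext z
  simp [surviving]

theorem tl_surv_subset {Z : Type} (S : List Z) (I : Finset (Fin S.length)) :
    surviving S I ⊆ S := by
  intro z hz
  simp only [surviving, List.mem_map] at hz
  obtain ⟨i, _, rfl⟩ := hz
  exact List.get_mem S i

theorem tl_mem_removed {Z T : Type} (S : List Z) (tk : Fin S.length → T)
    (I : Finset (Fin S.length)) (r : Z × T) :
    r ∈ removedPairs S tk I ↔ ∃ p ∈ I, r = (S.get p, tk p) := by
  unfold removedPairs
  simp only [Multiset.mem_map, Finset.mem_val]
  exact exists_congr fun p => and_congr_right fun _ => eq_comm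

/-- The layers of a dataset. -/
theorem tl_dataset {X : Type} [DecidableEq X] (H : Finset (X → Bool)) (K : ℕ)
    (D : Finset (X × Bool) → (X → Bool))
    (hD : ∀ S : Finset (X × Bool), tlReal H S → S.Nonempty →
        ∃ T ⊆ S, T.Nonempty ∧ T.card ≤ K ∧ ∀ S', T ⊆ S' → S' ⊆ S →
          ∀ P, tlReal H (P ∪ S) → D (P ∪ S') = D (P ∪ T))
    (S : List (X × Bool)) :
    ∃ lay : Fin S.length → ℕ, tlReal H S.toFinset → ((∀ p, lay p < S.length) ∧
      ∀ i, (Finset.univ.filter fun p => lay p = i).card ≤ K ∧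
        (∀ p q, lay p = i → lay q = i → S.get p = S.get q → p = q) ∧
        (∀ I P, (∀ p ∈ I, lay p ≠ i) → P ⊆ S.toFinset →
          D (P ∪ ((Finset.univ.filter fun p => i ≤ lay p) \ I).image S.get) =
          D (P ∪ (Finset.univ.filter fun p => lay p = i).image S.get))) := by
  by_cases hr : tlReal H S.toFinset
  swap
  · exact ⟨fun _ => 0, fun h => absurd h hr⟩
  obtain ⟨lay, hlay⟩ := tl_layers (ι := Fin S.length) (fun J L => L.card ≤ K ∧
        (∀ p q, p ∈ L → q ∈ L → S.get p = S.get q → p = q) ∧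
        (∀ I P, Disjoint I L → P ⊆ S.toFinset →
          D (P ∪ (J \ I).image S.get) = D (P ∪ L.image S.get))) (by simp) (by
    intro J hJ
    have hJS : J.image S.get ⊆ S.toFinset := by
      intro z hz
      obtain ⟨p, _, rfl⟩ := Finset.mem_image.1 hz
      exact List.mem_toFinset.2 (List.get_mem S p)
    have hmono : ∀ A : Finset (X × Bool), A ⊆ S.toFinset → tlReal H A := by
      obtain ⟨h, hh, hz⟩ := hr
      exact fun A hA => ⟨h, hh, fun z hz' => hz z (hA hz')⟩
    obtain ⟨T, hTJ, hTne, hTc, hT⟩ := hD (J.image S.get) (hmono _ hJS) (hJ.image _)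
    obtain ⟨L, hLJ, hinj, himg⟩ : ∃ L ⊆ J, Set.InjOn S.get L ∧ L.image S.get = T := by
      obtain ⟨L, hL1, hL2⟩ := Finset.exists_subset_injOn_image_eq_of_surjOn (f := S.get) (J : Set (Fin S.length)) T (by
        intro z hz
        have := hTJ hz
        obtain ⟨p, hp, hpz⟩ := Finset.mem_image.1 this
        exact ⟨p, hp, hpz⟩)
      exact ⟨L, by exact_mod_cast hL1, hL2.1, hL2.2⟩
    refine ⟨L, hLJ, ?_, ?_, ?_, ?_⟩
    · rw [← himg] at hTne
      exact Finset.image_nonempty.1 hTne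
    · rw [← Finset.card_image_of_injOn hinj, himg]; exact hTc
    · exact fun p q hp hq h => hinj hp hq h
    · intro I P hI hP
      rw [himg]
      refine hT _ ?_ (Finset.image_subset_image Finset.sdiff_subset) P
        (hmono _ (Finset.union_subset hP hJS))
      rw [← himg]
      apply Finset.image_subset_image
      intro p hp
      exact Finset.mem_sdiff.2 ⟨hLJ hp, fun h => Finset.disjoint_left.1 hI h hp⟩) Finset.univ
  refine ⟨lay, fun _ => ⟨?_, ?_⟩⟩
  · intro p
    have h1 : Finset.range (lay p + 1) ⊆ Finset.univ.image lay := by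
      intro i hi
      have hi' : i ≤ lay p := by simpa [Nat.lt_succ_iff] using hi
      obtain ⟨q, hq⟩ := (hlay i).1 ⟨p, by simpa using hi'⟩
      exact Finset.mem_image.2 ⟨q, Finset.mem_univ _, by simpa using hq⟩
    have h2 := Finset.card_le_card h1
    have h3 : (Finset.univ.image lay).card ≤ S.length := by
      simpa using Finset.card_image_le (s := (Finset.univ : Finset (Fin S.length))) (f := lay)
    rw [Finset.card_range] at h2
    omega
  · intro i
    obtain ⟨-, h1, h2, h3⟩ := hlay i
    refine ⟨h1, fun p q hp hq => h2 p q (by simpa using hp) (by simpa using hq), ?_⟩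
    intro I P hI hP
    refine h3 I P ?_ hP
    rw [Finset.disjoint_left]
    intro p hp hp'
    exact hI p hp (by simpa using hp')

/-- **Theorem (TiLU scheme for mergeable classes with compressions).** Let `H` be a `C`-bit
mergeable concept class over a finite domain `X` (witnessed by `Encode`, `Decode`, `Merge`),
that moreover admits `K`-compressions: a relation `Compress` such that every `H`-realizable
dataset `S` has at least one compression, and any compression `T` of `S` satisfies
`|T| ≤ K`, `T ⊆ S` (as multisets), `Encode T = Encode S`, and `T` is a compression of
`S ∖ {z}` for every `z ∈ S ∖ T`. Then for every dataset size `n` there is a ticketed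
learning–unlearning scheme for `H`, valid for `H`-realizable datasets of size (at most) `n`,
with auxiliary information of `⌈log₂ |H|⌉` bits and tickets of
`2K·⌈log₂ |Z|⌉ + ⌈log₂ n⌉` bits, where `Z = X × {0,1}`. -/
theorem tilu_for_mergeable_with_compressions {X : Type} [Fintype X] [DecidableEq X]
    (H : Finset (X → Bool)) (C K : ℕ)
    (Encode : List (X × Bool) → Fin C → Bool)
    (Decode : (Fin C → Bool) → X → Bool)
    (Merge : (Fin C → Bool) → (Fin C → Bool) → Fin C → Bool)
    (Compress : List (X × Bool) → List (X × Bool) → Prop)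
    (hperm : ∀ S₁ S₂ : List (X × Bool), S₁.Perm S₂ → Encode S₁ = Encode S₂)
    (hdecH : ∀ b, Decode b ∈ H)
    (hdecERM : ∀ S, IsRealizable ↑H S → Decode (Encode S) ∈ ERM ↑H S)
    (hmerge : ∀ S₁ S₂, IsRealizable ↑H (S₁ ++ S₂) →
      Encode (S₁ ++ S₂) = Merge (Encode S₁) (Encode S₂))
    (hex : ∀ S, IsRealizable ↑H S → ∃ T, Compress S T)
    (hcmp : ∀ S T, IsRealizable ↑H S → Compress S T →
      T.length ≤ K ∧ T.Subperm S ∧ Encode T = Encode S ∧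
        ∀ z ∈ S.diff T, Compress (S.erase z) T) :
    ∀ n : ℕ,
      ∃ (Learn : (S : List (X × Bool)) →
            (X → Bool) × (Fin (Nat.clog 2 H.card) → Bool) ×
              (Fin S.length →
                Fin (2 * K * Nat.clog 2 (Fintype.card (X × Bool)) + Nat.clog 2 n) → Bool))
        (Unlearn :
          Multiset ((X × Bool) ×
              (Fin (2 * K * Nat.clog 2 (Fintype.card (X × Bool)) + Nat.clog 2 n) → Bool)) →
            (Fin (Nat.clog 2 H.card) → Bool) → (X → Bool)),
        ∀ S : List (X × Bool), S.length ≤ n → IsRealizable ↑H S →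
          (Learn S).1 ∈ ERM ↑H S ∧
          ∀ I : Finset (Fin S.length),
            Unlearn (removedPairs S (Learn S).2.2 I) (Learn S).2.1 =
              (Learn (surviving S I)).1 := by
  intro n
  have hclog : Fintype.card (↥H) ≤ 2 ^ Nat.clog 2 H.card := by
    rw [Fintype.card_coe]; exact Nat.le_pow_clog (by norm_num) _
  obtain ⟨ah, hah⟩ := tl_bits (↥H) _ hclog
  rcases Nat.eq_zero_or_pos K with hK0 | hK
  · subst hK0
    refine ⟨fun S => (Decode (Encode []), fun _ => false, fun _ _ => false),
      fun _ _ => Decode (Encode []), ?_⟩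
    intro S _ hr
    refine ⟨?_, fun _ => rfl⟩
    obtain ⟨T, hT⟩ := hex S hr
    obtain ⟨h1, -, h3, -⟩ := hcmp S T hr hT
    have : T = [] := List.length_eq_zero_iff.1 (by omega)
    subst this
    dsimp only
    rw [h3]
    exact hdecERM S hr
  obtain ⟨D, hDH, hDz, hDc⟩ := tl_core H C K hK Encode Decode Merge Compress hperm hdecH hdecERM
    hmerge hex hcmp
  obtain ⟨enc, dec, hed⟩ := tl_ticket (X := X) K n hK
  choose lay hlay using tl_dataset H K D hDc
  have hne : Nonempty (↥H) := ⟨⟨D ∅, hDH ∅⟩⟩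
  classical
  let LI : (S : List (X × Bool)) → ℕ → Finset (X × Bool) := fun S i =>
    (Finset.univ.filter fun p => lay S p = i).image S.get
  let tk : (S : List (X × Bool)) → Fin S.length →
      Fin (2 * K * Nat.clog 2 (Fintype.card (X × Bool)) + Nat.clog 2 n) → Bool := fun S p =>
    enc (S.get p) (lay S p, LI S (lay S p), LI S (lay S p + 1))
  let firstFree : Multiset ((X × Bool) ×
      (Fin (2 * K * Nat.clog 2 (Fintype.card (X × Bool)) + Nat.clog 2 n) → Bool)) → ℕ := fun R =>
    sInf {i | ∀ r ∈ R, (dec r.1 r.2).1 ≠ i}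
  let Q : Multiset ((X × Bool) ×
      (Fin (2 * K * Nat.clog 2 (Fintype.card (X × Bool)) + Nat.clog 2 n) → Bool)) →
      Finset (X × Bool) := fun R => Finset.univ.filter fun z =>
    (∃ r ∈ R, (dec r.1 r.2).1 < firstFree R ∧ z ∈ (dec r.1 r.2).2.1 ∧
      ∀ r' ∈ R, (dec r'.1 r'.2).1 = (dec r.1 r.2).1 → r'.1 ≠ z) ∨
    (∃ r ∈ R, (dec r.1 r.2).1 + 1 = firstFree R ∧ z ∈ (dec r.1 r.2).2.2)
  refine ⟨fun S => (D S.toFinset, ah ⟨D S.toFinset, hDH _⟩, tk S),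
    fun R aux => if firstFree R = 0 then (Function.invFun ah aux).1 else D (Q R), ?_⟩
  intro S hSn hr
  have hrS : tlReal H S.toFinset := by
    rw [tl_real_iff] at hr
    obtain ⟨h, hh, hz⟩ := hr
    exact ⟨h, by simpa using hh, fun z hz' => hz z (by simpa using hz')⟩
  obtain ⟨hlt, hL⟩ := hlay S hrS
  refine ⟨⟨hDH _, fun g _ => ?_⟩, ?_⟩
  · have : empLoss (D S.toFinset) S = 0 := by
      rw [tl_loss_iff]
      exact fun z hz => hDz _ hrS z (by simpa using hz)
    dsimp only
    rw [this]; exact Nat.zero_le _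
  intro I
  dsimp only
  rw [tl_surv]
  have hLIc : ∀ i, (LI S i).card ≤ K := fun i => Finset.card_image_le.trans (hL i).1
  have hdec : ∀ p, dec (S.get p) (tk S p) = (lay S p, LI S (lay S p), LI S (lay S p + 1)) := by
    intro p
    refine hed _ _ _ _ (lt_of_lt_of_le (hlt p) hSn) ?_ (hLIc _) (hLIc _)
    exact Finset.mem_image.2 ⟨p, by simp, rfl⟩
  have hball : ∀ P : ((X × Bool) ×
      (Fin (2 * K * Nat.clog 2 (Fintype.card (X × Bool)) + Nat.clog 2 n) → Bool)) → Prop,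
      (∀ r ∈ removedPairs S (tk S) I, P r) ↔ ∀ p ∈ I, P (S.get p, tk S p) := by
    intro P
    simp only [tl_mem_removed]
    constructor
    · exact fun h p hp => h _ ⟨p, hp, rfl⟩
    · rintro h r ⟨p, hp, rfl⟩; exact h p hp
  have hbex : ∀ P : ((X × Bool) ×
      (Fin (2 * K * Nat.clog 2 (Fintype.card (X × Bool)) + Nat.clog 2 n) → Bool)) → Prop,
      (∃ r ∈ removedPairs S (tk S) I, P r) ↔ ∃ p ∈ I, P (S.get p, tk S p) := by
    intro P
    simp only [tl_mem_removed]
    constructor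
    · rintro ⟨r, ⟨p, hp, rfl⟩, h⟩; exact ⟨p, hp, h⟩
    · rintro ⟨p, hp, h⟩; exact ⟨_, ⟨p, hp, rfl⟩, h⟩
  have hfree_eq : firstFree (removedPairs S (tk S) I) = sInf {i | ∀ p ∈ I, lay S p ≠ i} := by
    simp only [firstFree, hball, hdec]
  have hQ : ∀ z, z ∈ Q (removedPairs S (tk S) I) ↔
      (∃ p ∈ I, lay S p < firstFree (removedPairs S (tk S) I) ∧ z ∈ LI S (lay S p) ∧
        ∀ q ∈ I, lay S q = lay S p → S.get q ≠ z) ∨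
      (∃ p ∈ I, lay S p + 1 = firstFree (removedPairs S (tk S) I) ∧ z ∈ LI S (lay S p + 1)) := by
    intro z
    simp only [Q, hball, hbex, hdec, Finset.mem_filter, Finset.mem_univ, true_and]
  generalize removedPairs S (tk S) I = R at hfree_eq hQ ⊢
  generalize firstFree R = i at hfree_eq hQ ⊢
  have hne2 : {i | ∀ p ∈ I, lay S p ≠ i}.Nonempty :=
    ⟨S.length, fun p _ => (hlt p).ne⟩
  have hi1 : ∀ p ∈ I, lay S p ≠ i := by
    have := Nat.sInf_mem hne2
    rw [← hfree_eq] at this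
    exact this
  have hi2 : ∀ j < i, ∃ p ∈ I, lay S p = j := by
    intro j hj
    rw [hfree_eq] at hj
    have := Nat.notMem_of_lt_sInf hj
    simpa using this
  have himg : ∀ J : Finset (Fin S.length), J.image S.get ⊆ S.toFinset := by
    intro J z hz
    obtain ⟨p, _, rfl⟩ := Finset.mem_image.1 hz
    exact List.mem_toFinset.2 (List.get_mem S p)
  split_ifs with h0
  · rw [Function.leftInverse_invFun hah]
    dsimp only
    subst h0
    have e1 := (hL 0).2.2 I ∅ hi1 (by simp)
    have e2 := (hL 0).2.2 ∅ ∅ (by simp) (by simp)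
    have e3 : S.toFinset = (Finset.univ : Finset (Fin S.length)).image S.get := by
      ext z; simp [List.mem_iff_get]
    simp only [Nat.zero_le, Finset.filter_true, Finset.empty_union, Finset.sdiff_empty] at e1 e2
    rw [e3, e1, e2]
  · have e1 := (hL i).2.2 I ((Finset.univ.filter fun p => lay S p < i ∧ p ∉ I).image S.get) hi1
      (himg _)
    rw [← Finset.image_union, ← Finset.image_union] at e1
    have e2 : (Finset.univ.filter fun p => lay S p < i ∧ p ∉ I) ∪
        ((Finset.univ.filter fun p => i ≤ lay S p) \ I) = Finset.univ \ I := by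
      ext p
      simp only [Finset.mem_union, Finset.mem_filter, Finset.mem_univ, true_and, Finset.mem_sdiff]
      have := lt_or_ge (lay S p) i
      tauto
    rw [e2] at e1
    rw [e1]
    congr 1
    ext z
    rw [hQ, Finset.image_union, Finset.mem_union]
    refine or_congr ?_ ?_
    · simp only [LI, Finset.mem_image, Finset.mem_filter, Finset.mem_univ, true_and]
      constructor
      · rintro ⟨p, hp, hpi, ⟨q, hq, rfl⟩, hall⟩
        exact ⟨q, ⟨by omega, fun hqI => hall q hqI hq rfl⟩, rfl⟩
      · rintro ⟨q, ⟨hqi, hqI⟩, rfl⟩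
        obtain ⟨p, hp, hpq⟩ := hi2 _ hqi
        refine ⟨p, hp, by omega, ⟨q, hpq.symm, rfl⟩, ?_⟩
        intro q' hq' hl he
        have := (hL (lay S q)).2.1 q' q (by omega) rfl he
        subst this
        exact hqI hq'
    · constructor
      · rintro ⟨p, hp, hpi, hz⟩
        rw [hpi] at hz
        exact hz
      · intro hz
        obtain ⟨p, hp, hpi⟩ := hi2 (i - 1) (by omega)
        have : lay S p + 1 = i := by omega
        exact ⟨p, hp, this, by rw [this]; exact hz⟩
end

section
/- There is a ticketed learning–unlearning scheme for the MinVal problem with space complexity (C_s = O(log|X|), C_t = O(log|X| + log α⁻¹(n))): for every finite linearly ordered domain X and every dataset S of n elements of X, Learn(S) returns min(S) (or ⊥ if S is empty), auxiliary information of O(log|X|) bits, and a ticket of O(log|X| + log α⁻¹(n)) bits per element, such that for every subset S_I of presented elements with their tickets, Unlearn returns min(S ∖ S_I) (or ⊥ if S ∖ S_I is empty). -/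
/-- The Ackermann-like hierarchy from the paper: `A r 1 = 2` for all `r ≥ 1`,
`A 1 t = 2 * t` for `t ≥ 2`, and `A (r+1) t = A r (A (r+1) (t-1))` for `t ≥ 2`.
(The values at `t = 0` and `r = 0` are junk values, never used for `r, t ≥ 1`.) -/
def A : ℕ → ℕ → ℕ
  | _, 0 => 0
  | _, 1 => 2
  | 0, t + 2 => 2 * (t + 2)
  | 1, t + 2 => 2 * (t + 2)
  | r + 2, t + 2 => A (r + 1) (A (r + 2) (t + 1))

/-- The Ackermann function `α(t) = A_t(t)`. -/
def ackFn (t : ℕ) : ℕ := A t t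

/-- The inverse-Ackermann function: the smallest `t` such that `n ≤ α(t)`. -/
noncomputable def invAck (n : ℕ) : ℕ := sInf {t | n ≤ ackFn t}

theorem A_one (t : ℕ) : A 1 t = 2 * t := by
  match t with
  | 0 => simp [A]
  | 1 => simp [A]
  | t + 2 => simp [A]

theorem A_at_one (r : ℕ) : A r 1 = 2 := by
  match r with
  | 0 => simp [A]
  | 1 => simp [A]
  | r + 2 => simp [A]

theorem A_succ (r t : ℕ) : A (r + 2) (t + 2) = A (r + 1) (A (r + 2) (t + 1)) := by
  simp [A]

theorem A_gt (r : ℕ) : ∀ t, 1 ≤ t → t + 1 ≤ A (r + 1) t := by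
  induction r with
  | zero => intro t ht; rw [A_one]; omega
  | succ r ih =>
    intro t ht
    induction t, ht using Nat.le_induction with
    | base => rw [A_at_one]
    | succ t ht ih2 =>
      obtain ⟨s, rfl⟩ : ∃ s, t = s + 1 := ⟨t - 1, by omega⟩
      have h : A (r + 1 + 1) (s + 1 + 1) = A (r + 1) (A (r + 2) (s + 1)) := A_succ r s
      rw [h]
      have := ih (A (r + 2) (s + 1)) (by
        have : s + 1 + 1 ≤ A (r + 2) (s + 1) := ih2
        omega)
      have h2 : s + 1 + 1 ≤ A (r + 2) (s + 1) := ih2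
      omega

theorem A_iter (r t : ℕ) : A (r + 2) (t + 1) = (A (r + 1))^[t] 2 := by
  induction t with
  | zero => simp [A_at_one]
  | succ t ih => rw [A_succ, ih, Function.iterate_succ_apply']

/-- A bad sequence of length `L` in dimension `d` with norm budget starting at `b`. -/
def BadRun (d b L : ℕ) (u : ℕ → Fin d → ℕ) : Prop :=
  (∀ i < L, ∑ j, u i j ≤ b + i) ∧ ∀ i j, i < j → j < L → ¬ u i ≤ u j

theorem phase (r : ℕ) (h : ∀ x, 1 ≤ x → ∃ u, BadRun (r + 1) x (A (r + 1) x - x) u) (c : ℕ) :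
    ∀ x, 1 ≤ x → ∃ u, BadRun (r + 2) (x + c) ((A (r + 1))^[c + 1] x - x) u ∧ ∀ i, u i 0 ≤ c := by
  induction c with
  | zero =>
    intro x hx
    obtain ⟨u, hu1, hu2⟩ := h x hx
    refine ⟨fun i => Fin.cons 0 (u i), ⟨?_, ?_⟩, ?_⟩
    · intro i hi
      simpa [Fin.sum_univ_succ] using hu1 i (by simpa using hi)
    · intro i j hij hj hle
      refine hu2 i j hij (by simpa using hj) fun k => ?_
      simpa using hle k.succ
    · simp
  | succ c ih =>
    intro x hx
    obtain ⟨u, hu1, hu2⟩ := h x hx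
    have hg := A_gt r x hx
    set L := A (r + 1) x - x with hL
    obtain ⟨w, ⟨hw1, hw2⟩, hw3⟩ := ih (A (r + 1) x) (by omega)
    have e : (A (r + 1))^[c + 1] (A (r + 1) x) = (A (r + 1))^[c + 1 + 1] x := rfl
    rw [e] at hw1 hw2
    refine ⟨fun i => if i < L then Fin.cons (c + 1) (u i) else w (i - L), ⟨?_, ?_⟩, ?_⟩
    · intro i hi
      by_cases hiL : i < L
      · have := hu1 i hiL
        simp only [hiL, if_true, Fin.sum_univ_succ, Fin.cons_zero, Fin.cons_succ] at this ⊢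
        omega
      · have := hw1 (i - L) (by omega)
        simp only [hiL, if_false]
        omega
    · intro i j hij hj hle
      by_cases hjL : j < L
      · have hiL : i < L := by omega
        simp only [hiL, hjL, if_true] at hle
        refine hu2 i j hij hjL fun k => ?_
        simpa using hle k.succ
      · by_cases hiL : i < L
        · simp only [hiL, hjL, if_true, if_false] at hle
          have h1 := hle 0
          have h2 := hw3 (j - L)
          simp only [Fin.cons_zero] at h1
          omega
        · simp only [hiL, hjL, if_false] at hle
          exact hw2 (i - L) (j - L) (by omega) (by omega) hle
    · intro i
      by_cases hiL : i < L
      · simp [hiL]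
      · simp only [hiL, if_false]
        have := hw3 (i - L)
        omega

theorem exists_run (r : ℕ) : ∀ x, 1 ≤ x → ∃ u, BadRun (r + 1) x (A (r + 1) x - x) u := by
  induction r with
  | zero =>
    intro x hx
    refine ⟨fun i _ => x - i, ?_, ?_⟩
    · intro i hi; simp; omega
    · intro i j hij hj hle
      have := hle 0
      simp only [zero_add, A_one] at hj
      simp only at this
      omega
  | succ r ih =>
    intro x hx
    rcases Nat.lt_or_ge x 2 with h2 | h2
    · obtain rfl : x = 1 := by omega
      rw [A_at_one]
      refine ⟨fun _ _ => 0, ?_, ?_⟩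
      · intro i hi; simp
      · intro i j hij hj; omega
    · obtain ⟨c, rfl⟩ : ∃ c, x = c + 2 := ⟨x - 2, by omega⟩
      obtain ⟨u, ⟨h1, h2⟩, -⟩ := phase r ih c 2 (by norm_num)
      have e : A (r + 1 + 1) (c + 2) = (A (r + 1))^[c + 1] 2 := A_iter r (c + 1)
      rw [← e] at h1 h2
      refine ⟨u, ?_, ?_⟩
      · intro i hi
        exact le_trans (h1 i (by omega)) (by omega)
      · intro i j hij hj
        exact h2 i j hij (by omega)

theorem le_ackFn_invAck (n : ℕ) : n ≤ ackFn (invAck n) := by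
  have : (({t | n ≤ ackFn t} : Set ℕ)).Nonempty := by
    refine ⟨n, ?_⟩
    rcases n with _ | n
    · simp
    · have := A_gt n (n + 1) (by omega)
      simp only [Set.mem_ofPred_eq, ackFn]
      omega
  exact Nat.sInf_mem this

/-- The ticket symbols. -/
abbrev Sym3 (t : ℕ) := (Fin t ⊕ Fin t) ⊕ Unit

theorem exists_vec (n t : ℕ) (hn : n ≤ ackFn t) :
    ∃ v : ℕ → (Sym3 t → ℕ), (∀ m, m ≤ n → ∑ k, v m k = m) ∧
      ∀ m m', 1 ≤ m → m < m' → m' ≤ n → ¬ v m ≤ v m' := by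
  rcases Nat.eq_zero_or_pos t with rfl | htpos
  · have : n = 0 := by simpa [ackFn, A] using hn
    subst this
    refine ⟨fun _ _ => 0, ?_, ?_⟩
    · intro m hm; simp; omega
    · intros; omega
  have hrun : ∃ u, BadRun t t (A t t - t) u := by
    obtain ⟨r, rfl⟩ : ∃ r, t = r + 1 := ⟨t - 1, by omega⟩
    exact exists_run r (r + 1) (by omega)
  obtain ⟨u, hu1, hu2⟩ := hrun
  unfold ackFn at hn
  set p : ℕ → (Fin t ⊕ Fin t → ℕ) := fun m =>
    if m ≤ t then Sum.elim (fun j => if j.val + 1 = m then 1 else 0) (fun _ => 0)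
    else Sum.elim (fun _ => 0) (u (m - t - 1)) with hp
  have hps : ∀ m, m ≤ n → ∑ k, p m k ≤ m := by
    intro m hm
    by_cases hmt : m ≤ t
    · simp only [hp, hmt, if_true, Fintype.sum_sum_type, Sum.elim_inl, Sum.elim_inr]
      rcases m with _ | m
      · simp
      · have : ∀ j : Fin t, (j.val + 1 = m + 1) ↔ j = ⟨m, by omega⟩ := by
          intro j; rw [Fin.ext_iff]; simp
        simp only [this]
        simp
    · simp only [hp, hmt, if_false, Fintype.sum_sum_type, Sum.elim_inl, Sum.elim_inr]
      have := hu1 (m - t - 1) (by omega)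
      simp
      omega
  refine ⟨fun m => Sum.elim (p m) (fun _ => m - ∑ k, p m k), ?_, ?_⟩
  · intro m hm
    have := hps m hm
    rw [Fintype.sum_sum_type]
    simp only [Sum.elim_inl, Sum.elim_inr, Finset.univ_unique, Finset.sum_singleton]
    omega
  · intro m m' h1 hlt hm' hle
    have hle' : p m ≤ p m' := fun k => hle (Sum.inl k)
    by_cases hmt : m ≤ t
    · have := hle' (Sum.inl ⟨m - 1, by omega⟩)
      by_cases hmt' : m' ≤ t
      · simp only [hp, hmt, hmt', if_true, Sum.elim_inl] at this
        rw [if_pos (by omega), if_neg (by omega)] at this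
        omega
      · simp only [hp, hmt, hmt', if_true, if_false, Sum.elim_inl] at this
        rw [if_pos (by omega)] at this
        omega
    · have hmt' : ¬ m' ≤ t := by omega
      refine hu2 (m - t - 1) (m' - t - 1) (by omega) (by omega) fun k => ?_
      have := hle' (Sum.inr k)
      simpa only [hp, hmt, hmt', if_false, Sum.elim_inr] using this

theorem count_vec {K : Type} [Fintype K] [DecidableEq K] (w : K → ℕ) (k : K) :
    Multiset.count k (∑ j, Multiset.replicate (w j) j) = w k := by
  simp [Multiset.count_sum', Multiset.count_replicate]

theorem exists_multi (n t : ℕ) (hn : n ≤ ackFn t) :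
    ∃ V : ℕ → Multiset (Sym3 t), (∀ m, m ≤ n → (V m).card = m) ∧
      ∀ m m', 1 ≤ m → m < m' → m' ≤ n → ¬ V m ≤ V m' := by
  obtain ⟨v, h1, h2⟩ := exists_vec n t hn
  refine ⟨fun m => ∑ k, Multiset.replicate (v m k) k, ?_, ?_⟩
  · intro m hm
    simpa using h1 m hm
  · intro m m' hm hlt hm' hle
    refine h2 m m' hm hlt hm' fun k => ?_
    have := Multiset.le_iff_count.1 hle k
    rw [count_vec, count_vec] at this
    exact this

theorem exists_assign {ι K : Type} [Nonempty K] (J : Finset ι) :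
    ∀ M : Multiset K, M.card = J.card → ∃ f : ι → K, J.val.map f = M := by
  classical
  induction J using Finset.induction_on with
  | empty =>
    intro M hM
    refine ⟨fun _ => Classical.arbitrary K, ?_⟩
    simp at hM
    simp [hM]
  | insert a J ha ih =>
    intro M hM
    rw [Finset.card_insert_of_notMem ha] at hM
    obtain ⟨k, hk⟩ := Multiset.card_pos_iff_exists_mem.1 (by omega : 0 < M.card)
    obtain ⟨M2, rfl⟩ := Multiset.exists_cons_of_mem hk
    obtain ⟨f, hf⟩ := ih M2 (by simpa using hM)
    refine ⟨Function.update f a k, ?_⟩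
    rw [Finset.insert_val_of_notMem ha, Multiset.map_cons, Function.update_self, ← hf]
    congr 1
    refine Multiset.map_congr rfl fun i hi => ?_
    rw [Function.update_of_ne]
    rintro rfl
    exact ha hi

/-- A removed value all of whose copies are presented. -/
def Dead {N : ℕ} {K : Type} (V : ℕ → Multiset K) (M : Multiset (Fin N × Option (Fin N) × K))
    (x : Fin N) : Prop :=
  let T := M.filter (fun p => p.1 = x)
  T ≠ 0 ∧ T.map (fun p => p.2.2) = V T.card

open Classical in
noncomputable def unl {N : ℕ} {K : Type} (V : ℕ → Multiset K)
    (M : Multiset (Fin N × Option (Fin N) × K)) (a : Option (Fin N)) : Option (Fin N) :=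
  ((List.finRange N).filter fun x => decide
    ((a = some x ∨ ∃ y s, (y, some x, s) ∈ M) ∧ ¬ Dead V M x)).min?

theorem unl_correct {N n : ℕ} {K : Type} (V : ℕ → Multiset K)
    (hV : ∀ m m', 1 ≤ m → m < m' → m' ≤ n → ¬ V m ≤ V m')
    (S : List (Fin N)) (hS : S.length = n) (sym : Fin S.length → K)
    (hsym : ∀ x, ((Finset.univ.filter fun i => S.get i = x).val.map sym) =
      V (Finset.univ.filter fun i => S.get i = x).card)
    (I : Finset (Fin S.length)) :
    unl V (I.val.map fun i => (S.get i, (S.filter fun z => decide (S.get i < z)).min?, sym i)) S.min?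
      = (surviving S I).min? := by
  classical
  set M := I.val.map fun i =>
    (S.get i, (S.filter fun z => decide (S.get i < z)).min?, sym i) with hM
  have hsurv : ∀ x, x ∈ surviving S I ↔ ∃ i, i ∉ I ∧ S.get i = x := by
    intro x; simp [surviving]
  have hdead : ∀ x, x ∈ S → (Dead V M x ↔ x ∉ surviving S I) := by
    intro x hx
    obtain ⟨i0, hi0⟩ := List.mem_iff_get.1 hx
    have hT : M.filter (fun p => p.1 = x) = (I.filter fun i => S.get i = x).val.map fun i =>
        (S.get i, (S.filter fun z => decide (S.get i < z)).min?, sym i) := by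
      rw [hM, Multiset.filter_map]; rfl
    unfold Dead
    simp only [hT, Multiset.map_map, Function.comp_def, Multiset.card_map, Finset.card_val]
    set J := Finset.univ.filter fun i => S.get i = x with hJ
    set J' := I.filter fun i => S.get i = x with hJ'
    have hsub : J' ⊆ J := by intro i; simp [hJ, hJ']
    have hiJ : i0 ∈ J := Finset.mem_filter.2 ⟨Finset.mem_univ _, hi0⟩
    rw [hsurv]
    constructor
    · rintro ⟨hne, heq⟩ ⟨i, hi, hix⟩
      have hne' : 1 ≤ J'.card := by
        rw [Nat.one_le_iff_ne_zero]
        intro h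
        apply hne
        simp [Finset.card_eq_zero.1 h]
      have hlt : J'.card < J.card := by
        apply Finset.card_lt_card
        refine ⟨hsub, fun h => ?_⟩
        have : i ∈ J' := h (Finset.mem_filter.2 ⟨Finset.mem_univ _, hix⟩)
        simp [hJ', hi] at this
      refine hV _ _ hne' hlt ?_ ?_
      · rw [← hS]; simpa using J.card_le_univ
      · rw [← hsym x, ← heq]
        exact Multiset.map_le_map (Finset.val_le_iff.2 hsub)
    · intro h
      have : J' = J := by
        refine Finset.Subset.antisymm hsub fun i hi => ?_
        simp only [hJ, Finset.mem_filter, Finset.mem_univ, true_and] at hi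
        simp only [hJ', Finset.mem_filter]
        exact ⟨by_contra fun hh => h ⟨i, hh, hi⟩, hi⟩
      rw [this]
      refine ⟨?_, hsym x⟩
      intro h0
      rw [Multiset.map_eq_zero, Finset.val_eq_zero] at h0
      simp [h0] at hiJ
  have hsS : ∀ x ∈ surviving S I, x ∈ S := by
    intro x hx
    obtain ⟨i, -, rfl⟩ := (hsurv x).1 hx
    exact List.get_mem _ _
  unfold unl
  set D := (List.finRange N).filter fun x => decide
    ((S.min? = some x ∨ ∃ y s, (y, some x, s) ∈ M) ∧ ¬ Dead V M x) with hD
  have hDS : ∀ x ∈ D, x ∈ surviving S I := by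
    intro x hx
    simp only [hD, List.mem_filter, List.mem_finRange, true_and, decide_eq_true_eq] at hx
    obtain ⟨hc, hnd⟩ := hx
    have hxS : x ∈ S := by
      rcases hc with h | ⟨y, s, h⟩
      · exact (List.min?_eq_some_iff.1 h).1
      · simp only [hM, Multiset.mem_map, Prod.mk.injEq] at h
        obtain ⟨i, -, -, h, -⟩ := h
        exact (List.mem_filter.1 (List.min?_eq_some_iff.1 h).1).1
    exact by_contra fun h => hnd ((hdead x hxS).2 h)
  have hmin : ∀ x, (surviving S I).min? = some x → x ∈ D := by
    intro x hx
    obtain ⟨hx1, hx2⟩ := List.min?_eq_some_iff.1 hx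
    have hxS := hsS x hx1
    simp only [hD, List.mem_filter, List.mem_finRange, true_and, decide_eq_true_eq]
    refine ⟨?_, fun h => (hdead x hxS).1 h hx1⟩
    by_cases hlow : ∃ y ∈ S, y < x
    · right
      -- predecessor
      obtain ⟨y, hy, hymax⟩ := Finset.exists_max_image (S.toFinset.filter (· < x)) id (by
        obtain ⟨y, hy, hyx⟩ := hlow
        exact ⟨y, by simp [hy, hyx]⟩)
      simp only [Finset.mem_filter, List.mem_toFinset, id] at hy hymax
      obtain ⟨i, hi⟩ := List.mem_iff_get.1 hy.1
      have hiI : i ∈ I := by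
        by_contra h
        have := hx2 y ((hsurv y).2 ⟨i, h, hi⟩)
        exact absurd hy.2 (not_lt.2 this)
      refine ⟨y, sym i, ?_⟩
      simp only [hM, Multiset.mem_map, Prod.mk.injEq]
      refine ⟨i, hiI, hi, ?_, rfl⟩
      rw [hi, List.min?_eq_some_iff]
      refine ⟨by simp [hxS, hy.2], ?_⟩
      intro b hb
      simp only [List.mem_filter, decide_eq_true_eq] at hb
      by_contra h
      exact absurd hb.2 (not_lt.2 (hymax b ⟨hb.1, not_le.1 h⟩))
    · left
      push Not at hlow
      exact List.min?_eq_some_iff.2 ⟨hxS, hlow⟩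
  rcases hs : (surviving S I).min? with _ | x
  · rw [List.min?_eq_none_iff] at hs ⊢
    rw [List.eq_nil_iff_forall_not_mem]
    intro x hx
    have := hDS x hx
    simp [hs] at this
  · obtain ⟨hx1, hx2⟩ := List.min?_eq_some_iff.1 hs
    exact List.min?_eq_some_iff.2 ⟨hmin x hs, fun b hb => hx2 b (hDS b hb)⟩

theorem exists_enc {α : Type} [Fintype α] (k : ℕ) (h : Fintype.card α ≤ 2 ^ k) :
    ∃ e : α → (Fin k → Bool), Function.Injective e := by
  have : Fintype.card α ≤ Fintype.card (Fin k → Bool) := by simpa using h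
  obtain ⟨e⟩ := Function.Embedding.nonempty_of_card_le this
  exact ⟨e, e.injective⟩


/-- **Theorem (TiLU scheme for MinVal).** There is a constant `c` such that for every finite
linearly ordered domain `{1, …, N}` (represented by `Fin N`) and every dataset size `n`,
there is a ticketed learning–unlearning scheme for the MinVal problem with auxiliary
information of `O(log|X|)` bits and tickets of `O(log|X| + log α⁻¹(n))` bits: for every
dataset `S` of `n` elements, `Learn S` returns `min S` (`none` if `S` is empty), the
auxiliary string and a ticket per element, and for every unlearning request `I` (consisting
of the removed elements together with their tickets), `Unlearn` returns `min (S ∖ S_I)`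
(`none` if `S ∖ S_I` is empty). -/
theorem minval_ticketed_scheme :
    ∃ c : ℕ, 0 < c ∧
      ∀ N n : ℕ, ∃ cs ct : ℕ,
        cs ≤ c * (Nat.clog 2 N + 1) ∧
        ct ≤ c * (Nat.clog 2 N + Nat.clog 2 (invAck n) + 1) ∧
        ∃ (Learn : (S : List (Fin N)) →
              Option (Fin N) × (Fin cs → Bool) × (Fin S.length → Fin ct → Bool))
          (Unlearn : Multiset (Fin N × (Fin ct → Bool)) → (Fin cs → Bool) → Option (Fin N)),
          ∀ S : List (Fin N), S.length = n →
            (Learn S).1 = S.min? ∧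
            ∀ I : Finset (Fin S.length),
              Unlearn (I.val.map fun i => (S.get i, (Learn S).2.2 i)) (Learn S).2.1 =
                (surviving S I).min? := by
  refine ⟨3, by norm_num, fun N n => ?_⟩
  set t := invAck n with ht
  obtain ⟨V, hV1, hV2⟩ := exists_multi n t (le_ackFn_invAck n)
  refine ⟨Nat.clog 2 N + 1, Nat.clog 2 N + Nat.clog 2 t + 3, by omega, by omega, ?_⟩
  have hN : N ≤ 2 ^ Nat.clog 2 N := Nat.le_pow_clog (by norm_num) N
  have hT : t ≤ 2 ^ Nat.clog 2 t := Nat.le_pow_clog (by norm_num) t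
  have hN1 : 1 ≤ 2 ^ Nat.clog 2 N := Nat.one_le_two_pow
  have hT1 : 1 ≤ 2 ^ Nat.clog 2 t := Nat.one_le_two_pow
  obtain ⟨ea, hea⟩ := exists_enc (α := Option (Fin N)) (Nat.clog 2 N + 1) (by
    simp [pow_succ]; omega)
  obtain ⟨et, het⟩ := exists_enc (α := Option (Fin N) × Sym3 t)
    (Nat.clog 2 N + Nat.clog 2 t + 3) (by
      have : 2 ^ (Nat.clog 2 N + Nat.clog 2 t + 3) =
        (2 * 2 ^ Nat.clog 2 N) * (4 * 2 ^ Nat.clog 2 t) := by ring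
      rw [this]
      simp only [Fintype.card_prod, Fintype.card_option, Fintype.card_fin, Fintype.card_sum,
        Fintype.card_unit]
      exact Nat.mul_le_mul (by omega) (by omega))
  have hsym : ∀ S : List (Fin N), ∃ sym : Fin S.length → Sym3 t, S.length = n →
      ∀ x, ((Finset.univ.filter fun i => S.get i = x).val.map sym) =
        V (Finset.univ.filter fun i => S.get i = x).card := by
    intro S
    by_cases hS : S.length = n
    · have : ∀ x, ∃ f : Fin S.length → Sym3 t,
          ((Finset.univ.filter fun i => S.get i = x).val.map f) =
            V (Finset.univ.filter fun i => S.get i = x).card := by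
        intro x
        apply exists_assign
        apply hV1
        rw [← hS]
        simpa using (Finset.univ.filter fun i => S.get i = x).card_le_univ
      choose f hf using this
      refine ⟨fun i => f (S.get i) i, fun _ x => ?_⟩
      rw [← hf x]
      refine Multiset.map_congr rfl fun i hi => ?_
      have : S.get i = x := by simpa using hi
      rw [this]
    · exact ⟨fun _ => Sum.inr (), fun h => absurd h hS⟩
  choose sym hsym using hsym
  haveI : Nonempty (Option (Fin N) × Sym3 t) := ⟨(none, Sum.inr ())⟩
  refine ⟨fun S => (S.min?, ea S.min?,
      fun i => et ((S.filter fun z => decide (S.get i < z)).min?, sym S i)),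
    fun M a => unl V (M.map fun p => (p.1, Function.invFun et p.2)) (Function.invFun ea a), ?_⟩
  intro S hS
  refine ⟨rfl, fun I => ?_⟩
  simp only [Multiset.map_map, Function.comp_def, Function.leftInverse_invFun hea _,
    Function.leftInverse_invFun het _]
  exact unl_correct V hV2 S hS (sym S) (hsym S hS) I
end

section
/- There exists a ticketed learning–unlearning scheme for the class H_thresh of one-dimensional threshold functions over X = {1, …, |X|}, valid for H_thresh-realizable datasets of size n, with space complexity (C_s = O(log|X|), C_t = O(log α⁻¹(n))): Learn(S) returns h ∈ ERM_{H_thresh}(S), auxiliary information of O(log|X|) bits, and a ticket of O(log α⁻¹(n)) bits per example, such that for every I ⊆ [n], Unlearn(S_I, aux, (t_i)_{i∈I}) returns the same hypothesis that Learn returns on S ∖ S_I. -/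
/-- The threshold function `h_{>a}(x) = 1{x > a}` on the domain `{1, …, N}`, represented on
`Fin N` (where `x : Fin N` stands for the domain point `x + 1`): `h_{>a} x = 1{a ≤ x}`. -/
def thrFn (N : ℕ) (a : ℕ) : Fin N → Bool := fun x => decide (a ≤ (x : ℕ))

/-- The class of one-dimensional threshold functions over `{1, …, N}`,
indexed by `a ∈ {0, 1, …, N}`. -/
def Hthr (N : ℕ) : Set (Fin N → Bool) := {h | ∃ a ≤ N, h = thrFn N a}

namespace TiLU

/-! ### Growth of the hierarchy -/

lemma A_one (t : ℕ) : A 1 t = 2 * t := by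
  match t with
  | 0 => simp [A]
  | 1 => simp [A]
  | t + 2 => simp [A]

lemma A_step (r t : ℕ) : A (r + 2) (t + 2) = A (r + 1) (A (r + 2) (t + 1)) := by
  simp [A]

lemma A_at_one (r : ℕ) : A r 1 = 2 := by
  cases r <;> simp [A]

lemma two_mul_le_A (r : ℕ) : ∀ t, 2 * t ≤ A (r + 1) t := by
  induction r with
  | zero => intro t; simp [A_one]
  | succ r ih =>
    intro t
    induction t with
    | zero => simp
    | succ t iht =>
      cases t with
      | zero => simp [A_at_one]
      | succ t =>
        rw [A_step]
        have := ih (A (r + 2) (t + 1))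
        have h2 : 2 * (t + 1) ≤ A (r + 2) (t + 1) := iht
        omega

lemma A_double (r t : ℕ) : 2 * (t + 2) ≤ A (r + 1) (t + 2) ∧
    A (r + 1) (t + 1) < A (r + 1) (t + 2) := by
  refine ⟨two_mul_le_A _ _, ?_⟩
  cases r with
  | zero => simp [A_one]
  | succ r =>
    rw [A_step]
    have := two_mul_le_A r (A (r + 2) (t + 1))
    have := two_mul_le_A (r + 1) (t + 1)
    have h3 : r + 1 + 1 = r + 2 := rfl
    rw [h3] at *
    omega

lemma A_mono (r : ℕ) : Monotone (A (r + 1)) := by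
  apply monotone_nat_of_le_succ
  intro t
  cases t with
  | zero => simp [A]
  | succ t => exact (A_double r t).2.le

/-! ### Size-indexing Sperner families -/

/-- A bad sequence of multisets over `{0,…,k-1}`, one of each weight in `[s, e)`. -/
def P (k s e : ℕ) : Prop := ∃ Q : ℕ → Multiset ℕ,
  (∀ w, s ≤ w → w < e → (Q w).card = w ∧ ∀ x ∈ Q w, x < k) ∧
  ∀ w v, s ≤ w → w < v → v < e → ¬ Q w ≤ Q v

/-- As `P (k+1)`, with the number of copies of token `k` bounded by `a`. -/
def G (k a s e : ℕ) : Prop := ∃ Q : ℕ → Multiset ℕ,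
  (∀ w, s ≤ w → w < e → (Q w).card = w ∧ (∀ x ∈ Q w, x < k + 1) ∧ (Q w).count k ≤ a) ∧
  ∀ w w', s ≤ w → w < w' → w' < e → ¬ Q w ≤ Q w'

lemma P.anti {k s e e' : ℕ} (h : P k s e) (he : e' ≤ e) : P k s e' := by
  obtain ⟨Q, h1, h2⟩ := h
  exact ⟨Q, fun w a b => h1 w a (by omega), fun w w' a b c => h2 w w' a b (by omega)⟩

lemma P_zero (k : ℕ) : P k 0 1 := by
  refine ⟨fun _ => 0, ?_, ?_⟩
  · intro w _ h
    simp; omega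
  · intro w w' _ _ _; omega

lemma P_one (s : ℕ) : P 1 s (s + 1) := by
  refine ⟨fun w => Multiset.replicate w 0, ?_, ?_⟩
  · intro w _ h
    simp only [Multiset.card_replicate, true_and]
    intro x hx
    rw [Multiset.eq_of_mem_replicate hx]; omega
  · intro w w' _ _ _; omega

/-- Iteration. -/
def iter (W : ℕ → ℕ) : ℕ → ℕ → ℕ
  | 0, x => W x
  | a + 1, x => iter W a (W x + 1)

lemma G_iter (k : ℕ) (W : ℕ → ℕ) (hW : ∀ s, P k s (W s)) :
    ∀ a x, G k a (x + a) (iter W a x) := by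
  intro a
  induction a with
  | zero =>
    intro x
    obtain ⟨Q, h1, h2⟩ := hW x
    refine ⟨Q, ?_, h2⟩
    intro w hw hw'
    obtain ⟨c1, c2⟩ := h1 w hw hw'
    refine ⟨c1, fun y hy => (c2 y hy).trans (Nat.lt_succ_self k), ?_⟩
    rw [Nat.le_zero, Multiset.count_eq_zero]
    intro hk
    exact lt_irrefl _ (c2 k hk)
  | succ a ih =>
    intro x
    obtain ⟨Q, h1, h2⟩ := hW x
    obtain ⟨R, g1, g2⟩ := ih (W x + 1)
    have key : ∀ w, x + (a + 1) ≤ w → w < W x + 1 + a →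
        (Q (w - (a + 1))).count k = 0 := by
      intro w hw hw'
      rw [Multiset.count_eq_zero]
      intro hk
      exact lt_irrefl _ ((h1 (w - (a + 1)) (by omega) (by omega)).2 k hk)
    refine ⟨fun w => if w < W x + 1 + a then Multiset.replicate (a + 1) k + Q (w - (a + 1))
      else R w, ?_, ?_⟩
    · intro w hw hw'
      by_cases hc : w < W x + 1 + a
      · simp only [hc, if_true]
        obtain ⟨c1, c2⟩ := h1 (w - (a + 1)) (by omega) (by omega)
        refine ⟨?_, ?_, ?_⟩
        · simp only [Multiset.card_add, Multiset.card_replicate, c1]; omega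
        · intro y hy
          rw [Multiset.mem_add] at hy
          rcases hy with hy | hy
          · rw [Multiset.eq_of_mem_replicate hy]; omega
          · exact (c2 y hy).trans (Nat.lt_succ_self k)
        · rw [Multiset.count_add, key w hw hc, Multiset.count_replicate_self]
      · simp only [hc, if_false]
        obtain ⟨c1, c2, c3⟩ := g1 w (by omega) hw'
        exact ⟨c1, c2, by omega⟩
    · intro w w' hw hww hw'
      by_cases hc : w < W x + 1 + a
      · by_cases hc' : w' < W x + 1 + a
        · simp only [hc, hc', if_true]
          rw [Multiset.add_le_add_iff_left]
          exact h2 _ _ (by omega) (by omega) (by omega)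
        · simp only [hc, hc', if_true, if_false]
          intro hle
          have := Multiset.count_le_of_le k hle
          rw [Multiset.count_add, key w hw hc, Multiset.count_replicate_self] at this
          have := (g1 w' (by omega) hw').2.2
          omega
      · have hc' : ¬ w' < W x + 1 + a := by omega
        simp only [hc, hc', if_false]
        exact g2 _ _ (by omega) hww hw'

lemma P_succ (k : ℕ) (W : ℕ → ℕ) (hW : ∀ s, P k s (W s)) (s : ℕ) :
    P (k + 1) s (iter W s 0) := by
  obtain ⟨Q, h1, h2⟩ := G_iter k W hW s 0
  simp only [Nat.zero_add] at h1 h2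
  exact ⟨Q, fun w a b => ⟨(h1 w a b).1, (h1 w a b).2.1⟩, h2⟩

lemma iter_succ_fn (a : ℕ) : ∀ x, iter (fun s => s + 1) a x = x + 2 * a + 1 := by
  induction a with
  | zero => intro x; simp [iter]
  | succ a ih => intro x; simp only [iter, ih]; omega

/-- `A` with the value `1` at `0`. -/
def B (r s : ℕ) : ℕ := if s = 0 then 1 else A r s

lemma iter_B (r a : ℕ) : ∀ j x, A (r + 2) (j + 1) ≤ x →
    A (r + 2) (j + 1 + a + 1) ≤ iter (B (r + 1)) a x := by
  induction a with
  | zero =>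
    intro j x hx
    have h0 := two_mul_le_A (r + 1) (j + 1)
    have h1 : x ≠ 0 := by
      have : r + 1 + 1 = r + 2 := rfl
      rw [this] at h0; omega
    simp only [iter, B, h1, if_false]
    have := A_step r j
    rw [show j + 1 + 0 + 1 = j + 2 by ring, this]
    exact A_mono r hx
  | succ a ih =>
    intro j x hx
    have h0 := two_mul_le_A (r + 1) (j + 1)
    have h1 : x ≠ 0 := by
      have : r + 1 + 1 = r + 2 := rfl
      rw [this] at h0; omega
    have h2 : A (r + 2) (j + 1 + 1) ≤ B (r + 1) x + 1 := by
      simp only [B, h1, if_false]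
      have := A_step r j
      rw [show j + 1 + 1 = j + 2 by ring, this]
      exact (A_mono r hx).trans (Nat.le_succ _)
    have := ih (j + 1) _ h2
    simp only [iter]
    rwa [show j + 1 + (a + 1) + 1 = j + 1 + 1 + a + 1 by ring]

lemma P_B (r : ℕ) : ∀ s, P (r + 2) s (B (r + 1) s) := by
  induction r with
  | zero =>
    intro s
    by_cases hs : s = 0
    · subst hs; simpa [B] using P_zero 2
    · apply (P_succ 1 _ P_one s).anti
      rw [iter_succ_fn]
      simp only [B, hs, if_false, Nat.zero_add, A_one]; omega
  | succ r ih =>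
    intro s
    by_cases hs : s = 0
    · subst hs; simpa [B] using P_zero (r + 3)
    · apply (P_succ _ _ ih s).anti
      obtain ⟨s, rfl⟩ := Nat.exists_eq_succ_of_ne_zero hs
      have h := iter_B r s 0 2 (by simp [A_at_one])
      have h3 : iter (B (r + 1)) (s.succ) 0 = iter (B (r + 1)) s 2 := by
        simp [iter, B]
      rw [h3]
      refine le_trans ?_ h
      simp only [B, hs, if_false]
      apply A_mono (r + 1)
      simp only [Nat.succ_eq_add_one]
      omega

lemma le_ack_invAck (n : ℕ) : n ≤ ackFn (invAck n) := by
  have : {t | n ≤ ackFn t}.Nonempty := by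
    refine ⟨n, ?_⟩
    cases n with
    | zero => exact Nat.zero_le _
    | succ n =>
      have := two_mul_le_A n (n + 1)
      show n + 1 ≤ A (n + 1) (n + 1)
      omega
  exact Nat.sInf_mem this

lemma familyNat (n : ℕ) : ∃ Q : ℕ → Multiset ℕ,
    (∀ s, 1 ≤ s → s ≤ n → (Q s).card = s ∧ ∀ x ∈ Q s, x < 2 * invAck n + 2) ∧
    ∀ s s', 1 ≤ s → s < s' → s' ≤ n → ¬ Q s ≤ Q s' := by
  have hn := le_ack_invAck n
  generalize invAck n = t at *
  cases t with
  | zero =>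
    have : n = 0 := by simpa [ackFn, A] using hn
    subst this
    exact ⟨fun _ => 0, fun s _ _ => by omega, fun s s' _ _ _ => by omega⟩
  | succ r =>
    obtain ⟨Q, h1, h2⟩ := P_B r (r + 2)
    have hB : n < B (r + 1) (r + 2) := by
      have := (A_double r r).2
      simp only [B, ackFn] at *
      simp
      omega
    refine ⟨fun s => if s ≤ r + 1 then Multiset.replicate s (r + 2 + s) else Q s, ?_, ?_⟩
    · intro s hs hsn
      by_cases hc : s ≤ r + 1
      · simp only [hc, if_true, Multiset.card_replicate, true_and]
        intro x hx
        rw [Multiset.eq_of_mem_replicate hx]; omega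
      · simp only [hc, if_false]
        obtain ⟨c1, c2⟩ := h1 s (by omega) (by omega)
        exact ⟨c1, fun x hx => by have := c2 x hx; omega⟩
    · intro s s' hs hss hsn
      by_cases hc : s ≤ r + 1
      · simp only [hc, if_true]
        intro hle
        have hm : r + 2 + s ∈ Multiset.replicate s (r + 2 + s) := by
          rw [Multiset.mem_replicate]; exact ⟨by omega, rfl⟩
        have hm' := Multiset.mem_of_le hle hm
        by_cases hc' : s' ≤ r + 1
        · simp only [hc', if_true] at hm'
          have := Multiset.eq_of_mem_replicate hm'; omega
        · simp only [hc', if_false] at hm'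
          have := (h1 s' (by omega) (by omega)).2 _ hm'; omega
      · have hc' : ¬ s' ≤ r + 1 := by omega
        simp only [hc, hc', if_false]
        exact h2 _ _ (by omega) hss (by omega)

lemma family (n : ℕ) : ∃ ct : ℕ, ct ≤ 8 * (Nat.clog 2 (invAck n) + 1) ∧
    ∃ Q : ℕ → Multiset (Fin ct → Bool),
    (∀ s, 1 ≤ s → s ≤ n → (Q s).card = s) ∧
    ∀ s s', 1 ≤ s → s < s' → s' ≤ n → ¬ Q s ≤ Q s' := by
  obtain ⟨Q, h1, h2⟩ := familyNat n
  generalize invAck n = t at *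
  have hcl : 2 * t + 2 ≤ 2 ^ (Nat.clog 2 t + 2) := by
    have := Nat.le_pow_clog (b := 2) (by norm_num) t
    have hp : 1 ≤ 2 ^ Nat.clog 2 t := Nat.one_le_two_pow
    rw [pow_add]
    omega
  set ct := Nat.clog 2 t + 2 with hct
  refine ⟨ct, by omega, ?_⟩
  have hcard : Fintype.card (Fin ct → Bool) = 2 ^ ct := by simp
  let e : (Fin ct → Bool) ≃ Fin (2 ^ ct) := Fintype.equivFinOfCardEq hcard
  have hpos : 0 < 2 ^ ct := by positivity
  let enc : ℕ → (Fin ct → Bool) := fun x => e.symm ⟨x % 2 ^ ct, Nat.mod_lt _ hpos⟩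
  let dec : (Fin ct → Bool) → ℕ := fun x => e x
  have hde : ∀ x < 2 * t + 2, dec (enc x) = x := by
    intro x hx
    simp only [dec, enc, Equiv.apply_symm_apply]
    exact Nat.mod_eq_of_lt (by omega)
  have hQ : ∀ s, 1 ≤ s → s ≤ n → ((Q s).map enc).map dec = Q s := by
    intro s hs hsn
    rw [Multiset.map_map]
    conv_rhs => rw [← Multiset.map_id (Q s)]
    apply Multiset.map_congr rfl
    intro x hx
    exact hde x ((h1 s hs hsn).2 x hx)
  refine ⟨fun s => (Q s).map enc, ?_, ?_⟩
  · intro s hs hsn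
    rw [Multiset.card_map]; exact (h1 s hs hsn).1
  · intro s s' hs hss hsn hle
    apply h2 s s' hs hss hsn
    rw [← hQ s hs (by omega), ← hQ s' (by omega) hsn]
    exact Multiset.map_le_map hle

/-! ### The canonical threshold -/

/-- Sentinel positions. -/
def sent (N : ℕ) (b : Bool) : ℕ := if b then N + 1 else 0

/-- Some point with label `b` (or the sentinel) lies in dyadic block `q` of level `k`. -/
def hit {N : ℕ} (T : Set (Fin N × Bool)) (b : Bool) (k q : ℕ) : Prop :=
  sent N b / 2 ^ k = q ∨ ∃ x : Fin N, (x, b) ∈ T ∧ ((x : ℕ) + 1) / 2 ^ k = q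

/-- All labelled positions with sentinels. -/
def pt {N : ℕ} (T : Set (Fin N × Bool)) (b : Bool) (y : ℕ) : Prop :=
  y = sent N b ∨ ∃ x : Fin N, (x, b) ∈ T ∧ y = (x : ℕ) + 1

lemma hit_iff {N : ℕ} (T : Set (Fin N × Bool)) (b : Bool) (k q : ℕ) :
    hit T b k q ↔ ∃ y, pt T b y ∧ y / 2 ^ k = q := by
  constructor
  · rintro (h | ⟨x, h, hk⟩)
    · exact ⟨_, Or.inl rfl, h⟩
    · exact ⟨_, Or.inr ⟨x, h, rfl⟩, hk⟩
  · rintro ⟨y, (rfl | ⟨x, h, rfl⟩), hk⟩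
    · exact Or.inl hk
    · exact Or.inr ⟨x, h, hk⟩

/-- `m` separates the labels. -/
def Sep {N : ℕ} (T : Set (Fin N × Bool)) (m : ℕ) : Prop :=
  (∀ y, pt T false y → y < m) ∧ ∀ z, pt T true z → m ≤ z

lemma Sep.mono {N : ℕ} {T T' : Set (Fin N × Bool)} {m : ℕ} (h : Sep T m) (hT : T' ⊆ T) :
    Sep T' m := by
  have : ∀ b y, pt T' b y → pt T b y := by
    rintro b y (h | ⟨x, h, h'⟩)
    · exact Or.inl h
    · exact Or.inr ⟨x, hT h, h'⟩
  exact ⟨fun y hy => h.1 y (this _ _ hy), fun y hy => h.2 y (this _ _ hy)⟩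

/-- Split point of level `K` in the block containing block index `q`. -/
def F (q K : ℕ) : ℕ := (2 * q + 1) * 2 ^ (K - 1)

/-- The level. -/
noncomputable def lev {N : ℕ} (T : Set (Fin N × Bool)) : ℕ :=
  sInf {k | ∃ q, hit T false k q ∧ hit T true k q}

/-- The canonical split point. -/
noncomputable def M {N : ℕ} (T : Set (Fin N × Bool)) : ℕ :=
  F (sInf {q | hit T false (lev T) q ∧ hit T true (lev T) q}) (lev T)

lemma Sep.hit_unique {N : ℕ} {T : Set (Fin N × Bool)} {m k q : ℕ} (h : Sep T m)
    (h1 : hit T false k q) (h2 : hit T true k q) : q = m / 2 ^ k := by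
  obtain ⟨y, hy, rfl⟩ := (hit_iff _ _ _ _).1 h1
  obtain ⟨z, hz, hz'⟩ := (hit_iff _ _ _ _).1 h2
  have a := Nat.div_le_div_right (c := 2 ^ k) (h.1 y hy).le
  have b := Nat.div_le_div_right (c := 2 ^ k) (h.2 z hz)
  omega

lemma exists_lev {N : ℕ} (T : Set (Fin N × Bool)) :
    ∃ k, ∃ q, hit T false k q ∧ hit T true k q := by
  refine ⟨N + 1, 0, Or.inl (by simp [sent]), Or.inl ?_⟩
  simp only [sent, if_true]
  exact Nat.div_eq_of_lt Nat.lt_two_pow_self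

lemma Sep.lev_eq {N : ℕ} {T : Set (Fin N × Bool)} {m : ℕ} (h : Sep T m) :
    lev T = sInf {k | hit T false k (m / 2 ^ k) ∧ hit T true k (m / 2 ^ k)} := by
  unfold lev
  congr 1
  ext k
  constructor
  · rintro ⟨q, h1, h2⟩
    have := h.hit_unique h1 h2
    subst this
    exact ⟨h1, h2⟩
  · rintro h1
    exact ⟨_, h1⟩

lemma lev_spec {N : ℕ} (T : Set (Fin N × Bool)) :
    ∃ q, hit T false (lev T) q ∧ hit T true (lev T) q :=
  Nat.sInf_mem (s := {k | ∃ q, hit T false k q ∧ hit T true k q}) (exists_lev T)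

lemma Sep.M_eq {N : ℕ} {T : Set (Fin N × Bool)} {m : ℕ} (h : Sep T m) :
    M T = F (m / 2 ^ lev T) (lev T) := by
  unfold M
  have := Nat.sInf_mem (s := {q | hit T false (lev T) q ∧ hit T true (lev T) q}) (lev_spec T)
  rw [h.hit_unique this.1 this.2]

lemma Sep.M_sep {N : ℕ} {T : Set (Fin N × Bool)} {m : ℕ} (h : Sep T m) : Sep T (M T) := by
  obtain ⟨q, h1, h2⟩ := lev_spec T
  have hq := h.hit_unique h1 h2
  rw [h.M_eq, ← hq]
  obtain ⟨y, hy, hyq⟩ := (hit_iff _ _ _ _).1 h1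
  obtain ⟨z, hz, hzq⟩ := (hit_iff _ _ _ _).1 h2
  have hmin : ∀ k < lev T, ∀ y z, pt T false y → pt T true z → y / 2 ^ k ≠ z / 2 ^ k := by
    intro k hk y z hy hz he
    exact Nat.notMem_of_lt_sInf hk
      ⟨_, (hit_iff _ _ _ _).2 ⟨y, hy, rfl⟩, (hit_iff _ _ _ _).2 ⟨z, hz, he.symm⟩⟩
  have hlt : ∀ y z, pt T false y → pt T true z → y < z := fun y z hy hz =>
    (h.1 y hy).trans_le (h.2 z hz)
  generalize lev T = K at *
  cases K with
  | zero =>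
    have := hlt y z hy hz
    simp at hyq hzq
    omega
  | succ K =>
    have hmin := hmin K (Nat.lt_succ_self K)
    simp only [F, Nat.add_sub_cancel]
    have hp : 0 < 2 ^ K := by positivity
    rw [pow_succ, ← Nat.div_div_eq_div_mul] at hyq hzq
    constructor
    · intro y' hy'
      by_contra hcon
      rw [not_lt, ← Nat.le_div_iff_mul_le hp] at hcon
      have := Nat.div_le_div_right (c := 2 ^ K) (hlt y' z hy' hz).le
      have := hmin y' z hy' hz
      omega
    · intro z' hz'
      by_contra hcon
      rw [not_le, ← Nat.div_lt_iff_lt_mul hp] at hcon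
      have := Nat.div_le_div_right (c := 2 ^ K) (hlt y z' hy hz').le
      have := hmin y z' hy hz'
      omega

/-! ### Realizability -/

lemma empLoss_eq_zero {X : Type} (h : X → Bool) (S : List (X × Bool)) :
    empLoss h S = 0 ↔ ∀ z ∈ S, h z.1 = z.2 := by
  unfold empLoss
  rw [List.sum_eq_zero_iff]
  constructor
  · intro H z hz
    have := H _ (List.mem_map_of_mem hz)
    by_contra hc
    simp [hc] at this
  · intro H y hy
    obtain ⟨z, hz, rfl⟩ := List.mem_map.1 hy
    simp [H z hz]

lemma sep_of_realizable {N : ℕ} {S : List (Fin N × Bool)} (h : IsRealizable (Hthr N) S) :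
    ∃ m, Sep {z | z ∈ S} m := by
  obtain ⟨_, ⟨a, ha, rfl⟩, h0⟩ := h
  rw [empLoss_eq_zero] at h0
  refine ⟨a + 1, ?_, ?_⟩
  · rintro y (rfl | ⟨x, hx, rfl⟩)
    · simp [sent]
    · have := h0 _ hx
      simp [thrFn] at this
      omega
  · rintro y (rfl | ⟨x, hx, rfl⟩)
    · simp [sent]; omega
    · have := h0 _ hx
      simp [thrFn] at this
      omega

lemma Sep.bounds {N : ℕ} {T : Set (Fin N × Bool)} {m : ℕ} (h : Sep T m) :
    1 ≤ m ∧ m ≤ N + 1 :=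
  ⟨Nat.succ_le_of_lt (by simpa [sent] using h.1 _ (Or.inl rfl)), by simpa [sent] using h.2 _ (Or.inl rfl)⟩

lemma Sep.erm {N : ℕ} {S : List (Fin N × Bool)} {m : ℕ} (h : Sep {z | z ∈ S} m) :
    thrFn N (m - 1) ∈ ERM (Hthr N) S := by
  have hb := h.bounds
  refine ⟨⟨m - 1, by omega, rfl⟩, ?_⟩
  have : empLoss (thrFn N (m - 1)) S = 0 := by
    rw [empLoss_eq_zero]
    rintro ⟨x, b⟩ hx
    cases b with
    | false =>
      have := h.1 _ (Or.inr ⟨x, hx, rfl⟩)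
      simp [thrFn]; omega
    | true =>
      have := h.2 _ (Or.inr ⟨x, hx, rfl⟩)
      simp [thrFn]; omega
  intro g _
  rw [this]; exact Nat.zero_le _

/-! ### Groups and tickets -/

/-- Distance of `y` from `m` in the dyadic tree. -/
noncomputable def dst (m y : ℕ) : ℕ := sInf {k | y / 2 ^ k = m / 2 ^ k}

lemma dst_le_iff {L m y : ℕ} (hm : m < 2 ^ L) (hy : y < 2 ^ L) (k : ℕ) :
    dst m y ≤ k ↔ y / 2 ^ k = m / 2 ^ k := by
  constructor
  · intro h
    have hs : dst m y ∈ {k | y / 2 ^ k = m / 2 ^ k} :=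
      Nat.sInf_mem ⟨L, by
        show y / 2 ^ L = m / 2 ^ L
        rw [Nat.div_eq_of_lt hm, Nat.div_eq_of_lt hy]⟩
    have hs' : y / 2 ^ dst m y = m / 2 ^ dst m y := hs
    obtain ⟨j, rfl⟩ := Nat.exists_eq_add_of_le h
    rw [pow_add, ← Nat.div_div_eq_div_mul, ← Nat.div_div_eq_div_mul, hs']
  · intro h
    exact Nat.sInf_le h

lemma exists_tickets_group {ι τ : Type} [Inhabited τ] (s : Finset ι) (Q : Multiset τ)
    (h : Q.card = s.card) : ∃ f : ι → τ, s.val.map f = Q := by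
  classical
  induction s using Finset.induction_on generalizing Q with
  | empty =>
    refine ⟨fun _ => default, ?_⟩
    simp at h
    simp [h]
  | insert a s ha ih =>
    rw [Finset.card_insert_of_notMem ha] at h
    obtain ⟨q, hq⟩ := Multiset.exists_mem_of_ne_zero (s := Q) (by rintro rfl; simp at h)
    obtain ⟨R, rfl⟩ := Multiset.exists_cons_of_mem hq
    obtain ⟨f, hf⟩ := ih R (by simpa using h)
    refine ⟨Function.update f a q, ?_⟩
    rw [Finset.insert_val_of_notMem ha, Multiset.map_cons, Function.update_self, ← hf]
    congr 1
    apply Multiset.map_congr rfl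
    intro x hx
    apply Function.update_of_ne
    rintro rfl
    exact ha hx

lemma exists_tickets {ι τ γ : Type} [Fintype ι] [DecidableEq γ] [Inhabited τ] (cl : ι → γ)
    (Q : ℕ → Multiset τ) (n : ℕ) (hn : Fintype.card ι ≤ n)
    (hQ : ∀ s, 1 ≤ s → s ≤ n → (Q s).card = s) :
    ∃ tk : ι → τ, ∀ g, (Finset.univ.filter fun i => cl i = g).Nonempty →
      (Finset.univ.filter fun i => cl i = g).val.map tk =
        Q (Finset.univ.filter fun i => cl i = g).card := by
  have : ∀ g, ∃ f : ι → τ, (Finset.univ.filter fun i => cl i = g).Nonempty →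
      (Finset.univ.filter fun i => cl i = g).val.map f =
        Q (Finset.univ.filter fun i => cl i = g).card := by
    intro g
    by_cases hne : (Finset.univ.filter fun i => cl i = g).Nonempty
    · obtain ⟨f, hf⟩ := exists_tickets_group (Finset.univ.filter fun i => cl i = g)
        (Q (Finset.univ.filter fun i => cl i = g).card)
        (hQ _ hne.card_pos ((Finset.card_le_univ _).trans hn))
      exact ⟨f, fun _ => hf⟩
    · exact ⟨fun _ => default, fun h => absurd h hne⟩
  choose f hf using this
  refine ⟨fun i => f (cl i) i, ?_⟩
  intro g hg
  rw [← hf g hg]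
  apply Multiset.map_congr rfl
  intro i hi
  have hi' : i ∈ Finset.univ.filter fun i => cl i = g := hi
  rw [(Finset.mem_filter.1 hi').2]
  done

/-- The group is completely removed, judged from the removed tickets `R`. -/
def dead {τ : Type} (Q : ℕ → Multiset τ) (R : Multiset τ) : Prop :=
  1 ≤ R.card ∧ R = Q R.card

lemma dead_iff {ι τ : Type} (Q : ℕ → Multiset τ) (n : ℕ)
    (hQ : ∀ s s', 1 ≤ s → s < s' → s' ≤ n → ¬ Q s ≤ Q s')
    (D I J : Finset ι) (hJ : ∀ i, i ∈ J ↔ i ∈ I ∧ i ∈ D)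
    (hD : D.Nonempty) (hDn : D.card ≤ n) (tk : ι → τ)
    (htk : D.val.map tk = Q D.card) :
    ¬ dead Q (J.val.map tk) ↔ ∃ i ∈ D, i ∉ I := by
  constructor
  · intro h
    by_contra hcon
    push Not at hcon
    apply h
    have : J = D := by
      ext i; rw [hJ]
      exact ⟨fun h => h.2, fun h => ⟨hcon i h, h⟩⟩
    rw [this]
    have hc : (D.val.map tk).card = D.card := by simp
    refine ⟨by rw [hc]; exact hD.card_pos, ?_⟩
    rw [hc, htk]
  · rintro ⟨i, hi, hiI⟩ ⟨h1, h2⟩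
    have hss : J ⊂ D := by
      rw [Finset.ssubset_iff_of_subset (fun j hj => ((hJ j).1 hj).2)]
      exact ⟨i, hi, fun hj => hiI ((hJ i).1 hj).1⟩
    have hc : (J.val.map tk).card = J.card := by simp
    rw [hc] at h1 h2
    apply hQ _ _ h1 (Finset.card_lt_card hss) hDn
    rw [← h2, ← htk]
    exact Multiset.map_le_map (Finset.val_le_iff.2 hss.1)

/-- Auxiliary information before encoding. -/
abbrev Aux (N L : ℕ) : Type := Fin (N + 2) × (Bool → Fin (L + 1) → Bool)

/-- The class of an example relative to the split point `m`. -/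
noncomputable def cls {N : ℕ} (m : ℕ) (z : Fin N × Bool) : Bool × ℕ :=
  (z.2, dst m ((z.1 : ℕ) + 1))

/-- Tickets of removed examples in class `c`. -/
noncomputable def remTk {N : ℕ} {τ : Type} (m : ℕ) (R : Multiset ((Fin N × Bool) × τ))
    (c : Bool × ℕ) : Multiset τ :=
  (R.filter fun p => cls m p.1 = c).map Prod.snd

/-- Decoded nearness predicate. -/
def near {N L : ℕ} {τ : Type} (Q : ℕ → Multiset τ) (R : Multiset ((Fin N × Bool) × τ))
    (a : Aux N L) (b : Bool) (k : ℕ) : Prop :=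
  sent N b / 2 ^ k = (a.1 : ℕ) / 2 ^ k ∨
    ∃ g : Fin (L + 1), (g : ℕ) ≤ k ∧ a.2 b g = true ∧ ¬ dead Q (remTk (a.1 : ℕ) R (b, (g : ℕ)))

/-- Decoded unlearning. -/
noncomputable def unl {N L : ℕ} {τ : Type} (Q : ℕ → Multiset τ)
    (R : Multiset ((Fin N × Bool) × τ)) (a : Aux N L) : ℕ :=
  let K := sInf {k | near Q R a false k ∧ near Q R a true k}
  F ((a.1 : ℕ) / 2 ^ K) K

lemma mem_surviving {Z : Type} (S : List Z) (I : Finset (Fin S.length)) (z : Z) :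
    z ∈ surviving S I ↔ ∃ i, i ∉ I ∧ S.get i = z := by
  simp [surviving]

lemma unl_eq {N L n : ℕ} {τ : Type} (Q : ℕ → Multiset τ)
    (hL : N + 1 < 2 ^ L)
    (hQ : ∀ s s', 1 ≤ s → s < s' → s' ≤ n → ¬ Q s ≤ Q s')
    (S : List (Fin N × Bool)) (hS : S.length ≤ n) (tk : Fin S.length → τ) (a : Aux N L)
    (hsep : Sep {z | z ∈ S} (a.1 : ℕ))
    (ha : ∀ b g, a.2 b g = true ↔ ∃ i, cls (a.1 : ℕ) (S.get i) = (b, (g : ℕ)))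
    (htk : ∀ c, (Finset.univ.filter fun i => cls (a.1 : ℕ) (S.get i) = c).Nonempty →
      (Finset.univ.filter fun i => cls (a.1 : ℕ) (S.get i) = c).val.map tk =
        Q (Finset.univ.filter fun i => cls (a.1 : ℕ) (S.get i) = c).card)
    (I : Finset (Fin S.length)) :
    unl Q (removedPairs S tk I) a = M {z | z ∈ surviving S I} := by
  obtain ⟨m, bm⟩ := a
  simp only at hsep ha htk
  have hm : (m : ℕ) < 2 ^ L := by have := m.2; omega
  have hrem : ∀ c, remTk (m : ℕ) (removedPairs S tk I) c =
      (I.filter (fun i => cls (m : ℕ) (S.get i) = c)).val.map tk := by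
    intro c
    simp only [remTk, removedPairs, Multiset.filter_map, Multiset.map_map, Finset.filter_val]
    rfl
  have hnear : ∀ b k, near (L := L) Q (removedPairs S tk I) (m, bm) b k ↔
      hit {z | z ∈ surviving S I} b k ((m : ℕ) / 2 ^ k) := by
    intro b k
    unfold near hit
    apply or_congr Iff.rfl
    have hlt : ∀ x : Fin N, (x : ℕ) + 1 < 2 ^ L := fun x => by have := x.2; omega
    constructor
    · rintro ⟨g, hgk, hbg, hd⟩
      obtain ⟨i0, hi0⟩ := (ha b g).1 hbg
      have hne : (Finset.univ.filter fun i => cls (m : ℕ) (S.get i) = (b, (g : ℕ))).Nonempty :=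
        ⟨i0, by simpa using hi0⟩
      rw [hrem, dead_iff Q n hQ (Finset.univ.filter fun i => cls (m : ℕ) (S.get i) = (b, (g : ℕ))) I _
        (by simp) hne
        ((Finset.card_le_univ _).trans (by simpa using hS)) tk (htk _ hne)] at hd
      obtain ⟨i, hi, hiI⟩ := hd
      have hi := (Finset.mem_filter.1 hi).2
      simp only [cls, Prod.mk.injEq] at hi
      refine ⟨(S.get i).1, ?_, ?_⟩
      · rw [Set.mem_ofPred_eq, mem_surviving]
        exact ⟨i, hiI, Prod.ext rfl hi.1⟩
      · rw [← dst_le_iff hm (hlt _), hi.2]; exact hgk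
    · rintro ⟨x, hx, hxk⟩
      rw [Set.mem_ofPred_eq, mem_surviving] at hx
      obtain ⟨i, hiI, hi⟩ := hx
      rw [← dst_le_iff hm (hlt _)] at hxk
      have hgL : dst m ((x : ℕ) + 1) ≤ L := by
        rw [dst_le_iff hm (hlt _), Nat.div_eq_of_lt hm, Nat.div_eq_of_lt (hlt _)]
      have hcl : cls (m : ℕ) (S.get i) = (b, dst m ((x : ℕ) + 1)) := by
        rw [hi]; rfl
      refine ⟨⟨dst m ((x : ℕ) + 1), by omega⟩, hxk, (ha _ _).2 ⟨i, hcl⟩, ?_⟩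
      have hne : (Finset.univ.filter fun i =>
          cls (m : ℕ) (S.get i) = (b, dst m ((x : ℕ) + 1))).Nonempty :=
        ⟨i, by simpa using hcl⟩
      rw [hrem, dead_iff Q n hQ (Finset.univ.filter fun i => cls (m : ℕ) (S.get i) = (b, dst m ((x : ℕ) + 1))) I _
        (by simp) hne
        ((Finset.card_le_univ _).trans (by simpa using hS)) tk (htk _ hne)]
      exact ⟨i, by simpa using hcl, hiI⟩
  have hsub : {z | z ∈ surviving S I} ⊆ {z | z ∈ S} := by
    intro z hz
    obtain ⟨i, _, rfl⟩ := (mem_surviving _ _ _).1 hz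
    exact List.get_mem _ _
  have hsep' := hsep.mono hsub
  rw [hsep'.M_eq, hsep'.lev_eq]
  simp only [unl, hnear]

end TiLU

open TiLU in
/-- **Theorem (TiLU scheme for 1D thresholds).** There is a constant `c` such that for every
domain size `N` and dataset size `n`, there is a ticketed learning–unlearning scheme for the
class of 1D thresholds over `{1, …, N}`, valid for realizable datasets of size (at most) `n`,
with auxiliary information of `O(log|X|)` bits and tickets of only `O(log α⁻¹(n))` bits:
`Learn S` returns an empirical risk minimizer, the auxiliary string, and a ticket per
example, and for every unlearning request `I` (consisting of the removed examples together
with their tickets), `Unlearn` returns exactly the hypothesis that `Learn` returns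
on `S ∖ S_I`. -/
theorem thresholds_ticketed_scheme :
    ∃ c : ℕ, 0 < c ∧
      ∀ N n : ℕ, ∃ cs ct : ℕ,
        cs ≤ c * (Nat.clog 2 N + 1) ∧
        ct ≤ c * (Nat.clog 2 (invAck n) + 1) ∧
        ∃ (Learn : (S : List (Fin N × Bool)) →
              (Fin N → Bool) × (Fin cs → Bool) × (Fin S.length → Fin ct → Bool))
          (Unlearn : Multiset ((Fin N × Bool) × (Fin ct → Bool)) →
              (Fin cs → Bool) → (Fin N → Bool)),
          ∀ S : List (Fin N × Bool), S.length ≤ n → IsRealizable (Hthr N) S →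
            (Learn S).1 ∈ ERM (Hthr N) S ∧
            ∀ I : Finset (Fin S.length),
              Unlearn (removedPairs S (Learn S).2.2 I) (Learn S).2.1 =
                (Learn (surviving S I)).1 := by
  classical
  refine ⟨8, by norm_num, ?_⟩
  intro N n
  obtain ⟨ct, hct, Q, hQc, hQ⟩ := family n
  set L := Nat.clog 2 (N + 2) with hLdef
  have hL : N + 2 ≤ 2 ^ L := Nat.le_pow_clog (by norm_num) _
  have hLle : L ≤ Nat.clog 2 N + 2 := by
    apply Nat.clog_le_of_le_pow
    have := Nat.le_pow_clog (b := 2) (by norm_num) N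
    have hp : 1 ≤ 2 ^ Nat.clog 2 N := Nat.one_le_two_pow
    rw [pow_add]
    omega
  have hcard : Fintype.card (Aux N L) ≤ Fintype.card (Fin (3 * L + 2) → Bool) := by
    simp only [Fintype.card_prod, Fintype.card_fin, Fintype.card_fun, Fintype.card_bool]
    rw [← pow_mul]
    calc (N + 2) * 2 ^ ((L + 1) * 2) ≤ 2 ^ L * 2 ^ ((L + 1) * 2) :=
          Nat.mul_le_mul_right _ hL
      _ = 2 ^ (3 * L + 2) := by rw [← pow_add]; congr 1; ring
  obtain ⟨enc⟩ := Function.Embedding.nonempty_of_card_le hcard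
  have hdec : ∀ a, Function.invFun enc (enc a) = a :=
    Function.leftInverse_invFun enc.injective
  have hL1 : ∀ S : List (Fin N × Bool), ∃ o : Aux N L × (Fin S.length → Fin ct → Bool),
      S.length ≤ n → IsRealizable (Hthr N) S →
      Sep {z | z ∈ S} (M {z | z ∈ S}) ∧ ∀ I : Finset (Fin S.length),
        unl Q (removedPairs S o.2 I) o.1 = M {z | z ∈ surviving S I} := by
    intro S
    by_cases hS : S.length ≤ n ∧ IsRealizable (Hthr N) S
    · obtain ⟨hS, hr⟩ := hS
      obtain ⟨m0, hm0⟩ := sep_of_realizable hr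
      have hsep := hm0.M_sep
      have hb := hsep.bounds
      obtain ⟨tk, htk⟩ := exists_tickets (fun i => cls (M {z | z ∈ S}) (S.get i)) Q n
        (by simpa using hS) hQc
      have hlt : M {z | z ∈ S} < N + 2 := by omega
      let a : Aux N L := (⟨M {z | z ∈ S}, hlt⟩, fun b g =>
        decide (∃ i, cls (M {z | z ∈ S}) (S.get i) = (b, (g : ℕ))))
      have ha : ∀ b g, a.2 b g = true ↔ ∃ i, cls (a.1 : ℕ) (S.get i) = (b, (g : ℕ)) := by
        intro b g
        exact decide_eq_true_iff
      have hL' : N + 1 < 2 ^ L := by omega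
      exact ⟨(a, tk), fun _ _ => ⟨hsep, fun I => unl_eq Q hL' hQ S hS tk a hsep ha htk I⟩⟩
    · exact ⟨((⟨0, by omega⟩, fun _ _ => false), fun _ _ => false),
        fun h1 h2 => absurd ⟨h1, h2⟩ hS⟩
  choose o ho using hL1
  refine ⟨3 * L + 2, ct, by omega, hct,
    fun S => (thrFn N (M {z | z ∈ S} - 1), enc (o S).1, (o S).2),
    fun R a => thrFn N (unl Q R (Function.invFun enc a) - 1), ?_⟩
  intro S hS hr
  obtain ⟨h1, h2⟩ := ho S hS hr
  refine ⟨h1.erm, ?_⟩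
  intro I
  simp only [hdec, h2 I]
end
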